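/- arXiv:2006.16213 — 2 statements merged into one kernel-verified Lean document; each statement's English description precedes it below -/
import Mathlib

section
/- Let F : [0,∞) → [0,∞). Then: (1) F∘Λ is a one-sided Pólya frequency function for every one-sided Pólya frequency function Λ if and only if F(x) = c·x for some c > 0; (2) F∘f is a one-sided TN function that is non-zero at two or more points whenever f is a one-sided TN function that is non-zero at two or more points, if and only if F(x) = c·x, F(x) = c·1_{x>0}, or F(x) = c·1_{x=0} for some c > 0; (3) if F is non-zero, then F∘f is a one-sided TN function whenever f is a one-sided TN function, if and only if F(x) = c·x or F(x) = c·1_{x>0} for some c > 0. -/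
/-- A kernel on linearly ordered sets is totally non-negative if all matrices
obtained by evaluating it on increasing tuples have non-negative determinant. -/
def IsTNKernel {X Y : Type*} [LinearOrder X] [LinearOrder Y] (K : X → Y → ℝ) : Prop :=
  ∀ (n : ℕ) (x : Fin n → X) (y : Fin n → Y), StrictMono x → StrictMono y →
    0 ≤ (Matrix.of fun i j : Fin n => K (x i) (y j)).det

/-- A TN function: a Lebesgue-measurable function whose associated Toeplitz
kernel is totally non-negative. -/
def IsTNFun (f : ℝ → ℝ) : Prop :=
  Measurable f ∧ IsTNKernel fun x y : ℝ => f (x - y)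

/-- A Pólya frequency function: an integrable TN function taking values in
`[0,∞)` that is non-zero at two or more points. -/
def IsPolyaFrequencyFunction (Λ : ℝ → ℝ) : Prop :=
  MeasureTheory.Integrable Λ ∧ (∀ x, 0 ≤ Λ x) ∧
  (∃ a b : ℝ, a ≠ b ∧ Λ a ≠ 0 ∧ Λ b ≠ 0) ∧
  IsTNKernel fun x y : ℝ => Λ (x - y)

/-- A function is one-sided if it vanishes on `(−∞, x₀)` or on `(x₀, ∞)` for
some `x₀`. -/
def OneSided (f : ℝ → ℝ) : Prop :=
  ∃ x₀ : ℝ, (∀ x, x < x₀ → f x = 0) ∨ (∀ x, x₀ < x → f x = 0)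


theorem tn_nonneg {f : ℝ → ℝ} (h : IsTNKernel fun x y : ℝ => f (x - y)) (x : ℝ) : 0 ≤ f x := by
  have := h 1 (fun _ => x) (fun _ => 0) (Subsingleton.strictMono _) (Subsingleton.strictMono _)
  simpa using this

theorem tn_exch {f : ℝ → ℝ} (h : IsTNKernel fun x y : ℝ => f (x - y)) {a b d : ℝ}
    (had : a < d) (hdb : d < b) : f a * f b ≤ f d * f (a + b - d) := by
  have := h 2 ![d, b] ![0, d - a] (by
    intro i j hij; fin_cases i <;> fin_cases j <;> simp_all) (by
    intro i j hij; fin_cases i <;> fin_cases j <;> simp_all)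
  rw [Matrix.det_fin_two] at this
  simp at this
  rw [show a + b - d = b - (d - a) by ring]
  linarith

theorem tn_det3 {f : ℝ → ℝ} (h : IsTNKernel fun x y : ℝ => f (x - y)) {x1 x2 x3 y1 y2 y3 : ℝ}
    (h1 : x1 < x2) (h2 : x2 < x3) (h3 : y1 < y2) (h4 : y2 < y3) :
    0 ≤ f (x1 - y1) * (f (x2 - y2) * f (x3 - y3) - f (x2 - y3) * f (x3 - y2))
      - f (x1 - y2) * (f (x2 - y1) * f (x3 - y3) - f (x2 - y3) * f (x3 - y1))
      + f (x1 - y3) * (f (x2 - y1) * f (x3 - y2) - f (x2 - y2) * f (x3 - y1)) := by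
  have := h 3 ![x1, x2, x3] ![y1, y2, y3] (by
    intro i j hij; fin_cases i <;> fin_cases j <;> simp_all <;> linarith) (by
    intro i j hij; fin_cases i <;> fin_cases j <;> simp_all <;> linarith)
  rw [Matrix.det_fin_three] at this
  simp at this
  linarith

theorem tn_supp {f : ℝ → ℝ} (h : IsTNKernel fun x y : ℝ => f (x - y)) {a b d : ℝ}
    (had : a ≤ d) (hdb : d ≤ b) (ha : f a ≠ 0) (hb : f b ≠ 0) : f d ≠ 0 := by
  rcases had.eq_or_lt with rfl | had
  · exact ha
  rcases hdb.eq_or_lt with rfl | hdb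
  · exact hb
  intro h0
  have h1 := tn_exch h had hdb
  rw [h0, zero_mul] at h1
  have := mul_pos ((tn_nonneg h a).lt_of_ne' ha) ((tn_nonneg h b).lt_of_ne' hb)
  linarith

theorem tn_smul {X Y : Type*} [LinearOrder X] [LinearOrder Y] {K : X → Y → ℝ} (h : IsTNKernel K)
    {c : ℝ} (hc : 0 ≤ c) : IsTNKernel fun x y => c * K x y := by
  intro n x y hx hy
  have : (Matrix.of fun i j : Fin n => c * K (x i) (y j))
      = c • (Matrix.of fun i j : Fin n => K (x i) (y j)) := by ext; simp
  rw [this, Matrix.det_smul]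
  exact mul_nonneg (pow_nonneg hc _) (h n x y hx hy)

theorem tn_tilt {f : ℝ → ℝ} (h : IsTNKernel fun x y : ℝ => f (x - y)) (α : ℝ) :
    IsTNKernel fun x y : ℝ => Real.exp (α * (x - y)) * f (x - y) := by
  intro n x y hx hy
  have : (Matrix.of fun i j : Fin n => Real.exp (α * (x i - y j)) * f (x i - y j))
      = Matrix.diagonal (fun i => Real.exp (α * x i)) *
        (Matrix.of fun i j : Fin n => f (x i - y j)) *
        Matrix.diagonal (fun i => Real.exp (-(α * y i))) := by
    ext i j
    simp only [Matrix.mul_diagonal, Matrix.diagonal_mul, Matrix.of_apply]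
    rw [mul_sub, sub_eq_add_neg, Real.exp_add]; ring
  rw [this, Matrix.det_mul, Matrix.det_mul, Matrix.det_diagonal, Matrix.det_diagonal]
  have := h n x y hx hy
  positivity

theorem tn_reflect {f : ℝ → ℝ} (h : IsTNKernel fun x y : ℝ => f (x - y)) :
    IsTNKernel fun x y : ℝ => f (-(x - y)) := by
  intro n x y hx hy
  have := h n (fun i => - x (Fin.rev i)) (fun i => - y (Fin.rev i))
    (fun i j hij => by simpa using hx (Fin.rev_lt_rev.2 hij))
    (fun i j hij => by simpa using hy (Fin.rev_lt_rev.2 hij))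
  rw [← Matrix.det_submatrix_equiv_self Fin.revPerm] at this
  convert this using 3
  ext i j
  simp; ring_nf

/-- Staircase zero-one matrices have non-negative determinant. -/
theorem staircase_det : ∀ (n : ℕ) (P : Fin n → Fin n → Prop) [∀ i j, Decidable (P i j)],
    (∀ i i' j j', i ≤ i' → j' ≤ j → P i j → P i' j') →
    0 ≤ (Matrix.of fun i j : Fin n => if P i j then (1:ℝ) else 0).det := by
  intro n
  induction n with
  | zero => intro P _ _; simp
  | succ n ih =>
    intro P _ hP
    by_cases h0 : P 0 0
    · by_cases h1 : ∃ j : Fin n, P 0 j.succ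
      · obtain ⟨j, hj⟩ := h1
        have : (Matrix.of fun i j : Fin (n+1) => if P i j then (1:ℝ) else 0).det = 0 := by
          apply Matrix.det_zero_of_column_eq (i := 0) (j := j.succ) (Fin.succ_ne_zero j).symm
          intro k
          have e1 : P k 0 := hP 0 k 0 0 (Fin.zero_le _) le_rfl h0
          have e2 : P k j.succ := hP 0 k _ _ (Fin.zero_le _) le_rfl hj
          simp [e1, e2]
        rw [this]
      · push Not at h1
        rw [Matrix.det_succ_row_zero, Fin.sum_univ_succ]
        rw [Finset.sum_eq_zero (by intro j _; simp [h1 j])]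
        have := ih (fun i j => P i.succ j.succ)
          (fun i i' j j' h h' => hP _ _ _ _ (Fin.succ_le_succ_iff.2 h) (Fin.succ_le_succ_iff.2 h'))
        simp [h0]
        convert this using 2
        ext; rfl
    · have : (Matrix.of fun i j : Fin (n+1) => if P i j then (1:ℝ) else 0).det = 0 := by
        apply Matrix.det_eq_zero_of_row_eq_zero 0
        intro j
        have : ¬ P 0 j := fun h => h0 (hP 0 0 j 0 le_rfl (Fin.zero_le _) h)
        simp [this]
      rw [this]

open Classical in
theorem tn_upset (S : Set ℝ) (hS : IsUpperSet S) :
    IsTNKernel fun x y : ℝ => if x - y ∈ S then (1:ℝ) else 0 := by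
  intro n x y hx hy
  refine staircase_det n (fun i j => x i - y j ∈ S) ?_
  intro i i' j j' h h'
  exact hS (sub_le_sub (hx.monotone h) (hy.monotone h'))

open Classical in
theorem tn_downset (S : Set ℝ) (hS : IsLowerSet S) :
    IsTNKernel fun x y : ℝ => if x - y ∈ S then (1:ℝ) else 0 := by
  have := tn_reflect (f := fun t => if t ∈ {t : ℝ | -t ∈ S} then (1:ℝ) else 0)
    (tn_upset {t : ℝ | -t ∈ S} (fun a b hab ha => hS (neg_le_neg hab) ha))
  simpa using this

/-- A totally non-negative `(B+1) × B` matrix has no strictly alternating vector in its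
column span. -/
theorem var_dim : ∀ (B : ℕ) (A : Fin (B+1) → Fin B → ℝ) (e : Fin B → ℝ), IsTNKernel A →
    ¬ ∀ i : Fin (B+1), 0 < (-1:ℝ)^(i:ℕ) * ∑ b, A i b * e b := by
  intro B
  induction B with
  | zero => intro A e _ h; simpa using h 0
  | succ B ih =>
    intro A e hA h
    let w : Fin (B+2) → ℝ := fun i => ∑ b, A i b * e b
    let M : Matrix (Fin (B+2)) (Fin (B+2)) ℝ := Matrix.of fun i => Fin.snoc (A i) (w i)
    have hM : M.det = 0 := by
      rw [← Matrix.exists_mulVec_eq_zero_iff]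
      refine ⟨Fin.snoc e (-1), ?_, ?_⟩
      · intro h0
        have := congrFun h0 (Fin.last _)
        simp at this
      · ext i
        simp [Matrix.mulVec, dotProduct, Fin.sum_univ_castSucc, M, w]
    rw [Matrix.det_succ_column M (Fin.last _)] at hM
    have hmin : ∀ i : Fin (B+2), 0 ≤ (M.submatrix i.succAbove (Fin.last (B+1)).succAbove).det := by
      intro i
      have := hA (B+1) i.succAbove id (Fin.strictMono_succAbove i) strictMono_id
      convert this using 2
      ext r c
      simp [M, Matrix.submatrix]
    have hM2 : ∑ i : Fin (B+2), ((-1:ℝ)^(i:ℕ) * w i) *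
        (M.submatrix i.succAbove (Fin.last (B+1)).succAbove).det = 0 := by
      have h1 : (-1:ℝ)^(B+1) * ∑ i : Fin (B+2), ((-1:ℝ)^(i:ℕ) * w i) *
        (M.submatrix i.succAbove (Fin.last (B+1)).succAbove).det = 0 := by
        rw [← hM, Finset.mul_sum]
        refine Finset.sum_congr rfl fun i _ => ?_
        simp [M, pow_add]; ring
      exact (mul_eq_zero.1 h1).resolve_left (by positivity)
    rw [Finset.sum_eq_zero_iff_of_nonneg (fun i _ => mul_nonneg (h i).le (hmin i))] at hM2
    have h3 := hM2 (Fin.last _) (Finset.mem_univ _)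
    have h4 := (mul_eq_zero.1 h3).resolve_left (h (Fin.last _)).ne'
    obtain ⟨v, hv0, hv⟩ := Matrix.exists_mulVec_eq_zero_iff.2 h4
    obtain ⟨b, hb⟩ := Function.ne_iff.1 hv0
    simp at hb
    have hv' : ∀ i : Fin (B+1), ∑ c, A i.castSucc c * v c = 0 := by
      intro i
      have := congrFun hv i
      simpa [Matrix.mulVec, dotProduct, M] using this
    refine ih (fun i c => A i.castSucc (b.succAbove c))
      (fun c => e (b.succAbove c) - e b / v b * v (b.succAbove c)) ?_ ?_
    · intro n x y hx hy
      exact hA n (fun i => (x i).castSucc) (fun i => b.succAbove (y i))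
        ((Fin.strictMono_castSucc).comp hx) ((Fin.strictMono_succAbove b).comp hy)
    · intro i
      have h5 := h i.castSucc
      have h6 := hv' i
      rw [Fin.sum_univ_succAbove _ b] at h5 h6
      have h7 : ∑ c, A i.castSucc (b.succAbove c) * (e b / v b * v (b.succAbove c))
        = e b / v b * ∑ c, A i.castSucc (b.succAbove c) * v (b.succAbove c) := by
        rw [Finset.mul_sum]; exact Finset.sum_congr rfl fun _ _ => by ring
      have h8 : ∑ c, A i.castSucc (b.succAbove c) *
          (e (b.succAbove c) - e b / v b * v (b.succAbove c))
          = A i.castSucc b * e b + ∑ c, A i.castSucc (b.succAbove c) * e (b.succAbove c) := by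
        simp only [mul_sub, Finset.sum_sub_distrib]
        rw [h7, eq_neg_of_add_eq_zero_right h6]
        field_simp
        ring
      rw [h8]
      exact h5

open Polynomial in
theorem laguerre_prod (s : Multiset ℝ) (x : ℝ) :
    ((s.map fun r => X - C r).prod).eval x *
      (derivative (derivative ((s.map fun r => X - C r).prod))).eval x
    ≤ ((derivative ((s.map fun r => X - C r).prod)).eval x)^2 := by
  induction s using Multiset.induction_on with
  | empty => simp
  | cons r s ih =>
    rw [Multiset.map_cons, Multiset.prod_cons]
    set q := (s.map fun r => X - C r).prod
    simp only [derivative_mul, derivative_add, derivative_sub, derivative_X, derivative_C, eval_mul,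
      eval_add, eval_sub, eval_X, eval_C, sub_zero, one_mul]
    nlinarith [mul_le_mul_of_nonneg_left ih (sq_nonneg (x - r)), sq_nonneg (eval x q)]

open Polynomial in
theorem laguerre {p : ℝ[X]} (hp : p.Splits) (x : ℝ) :
    p.eval x * (derivative (derivative p)).eval x ≤ ((derivative p).eval x)^2 := by
  have h := hp.eq_prod_roots
  have := laguerre_prod p.roots x
  rw [h]
  simp only [derivative_C_mul, eval_mul, eval_C]
  nlinarith [mul_le_mul_of_nonneg_left this (sq_nonneg p.leadingCoeff)]

open Polynomial in
theorem splits_derivative {p : ℝ[X]} (hp : p.Splits) : (derivative p).Splits := by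
  rw [splits_iff_card_roots] at hp ⊢
  have h1 := card_roots_le_derivative p
  have h2 := natDegree_derivative_le p
  have h3 := card_roots' (derivative p)
  omega

open Polynomial in
theorem newton_ineq {p : ℝ[X]} (hp : p.Splits) (k : ℕ) :
    ((k:ℝ)+2) * p.coeff k * p.coeff (k+2) ≤ (k+1) * p.coeff (k+1)^2 := by
  have hs : ∀ k, (derivative^[k] p).Splits := by
    intro k
    induction k with
    | zero => exact hp
    | succ k ih => rw [Function.iterate_succ_apply']; exact splits_derivative ih
  have h := laguerre (hs k) 0
  rw [← Function.iterate_succ_apply' derivative, ← Function.iterate_succ_apply' derivative] at h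
  have hc : ∀ k, (derivative^[k] p).eval 0 = (k.factorial : ℝ) * p.coeff k := by
    intro k
    rw [← coeff_zero_eq_eval_zero, coeff_iterate_derivative]
    simp [Nat.descFactorial_self]
  rw [hc, hc, hc, Nat.succ_eq_add_one, Nat.succ_eq_add_one, Nat.factorial_succ (k+1), Nat.factorial_succ k] at h
  push_cast at h
  have hk : (0:ℝ) < k.factorial := by positivity
  have hk1 : (0:ℝ) < (k.factorial:ℝ)^2 * (k+1) := by positivity
  refine le_of_mul_le_mul_left ?_ hk1
  nlinarith

theorem block_tn {a : ℤ → ℝ} (ha : IsTNKernel fun i j : ℤ => a (i - j)) (M N B n : ℕ) (m : ℕ → ℕ)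
    (hm : Monotone m) (x : ℕ → ℝ) (hx : ∀ j, 0 ≤ x j) :
    IsTNKernel fun (i : Fin N) (b : Fin B) =>
      ∑ j ∈ (Finset.range M).filter (fun j => m j = b), x j * a (((n + i : ℕ) : ℤ) - j) := by
  intro k r c hr hc
  rw [Matrix.det_apply']
  simp only [Matrix.of_apply]
  simp_rw [Finset.prod_univ_sum, Finset.mul_sum]
  rw [Finset.sum_comm]
  refine Finset.sum_nonneg fun p hp => ?_
  have hp' : ∀ i, m (p i) = c i := fun i => by
    have := Fintype.mem_piFinset.1 hp i
    simp at this
    exact this.2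
  have := ha k (fun i => ((n + r i : ℕ) : ℤ)) (fun i => (p i : ℤ))
    (fun i j hij => by have := hr hij; simp; exact this)
    (fun i j hij => by
      have h1 := hc hij
      by_contra hcon
      have h2 : p j ≤ p i := by
        have := not_lt.1 hcon
        simpa using this
      have := hm h2
      rw [hp', hp'] at this
      exact absurd h1 (not_lt.2 (by exact_mod_cast this)))
  rw [Matrix.det_apply'] at this
  have h2 : 0 ≤ ∏ i, x (p i) := Finset.prod_nonneg fun i _ => hx _
  refine (mul_nonneg h2 this).trans_eq ?_
  rw [Finset.mul_sum]
  refine Finset.sum_congr rfl fun σ _ => ?_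
  simp only [Matrix.of_apply, Finset.prod_mul_distrib]
  ring

theorem conv_geom {a : ℤ → ℝ} {n : ℕ} (hs : ∀ k : ℤ, k < 0 ∨ (n:ℤ) < k → a k = 0) (c : ℂ) (hc : c ≠ 0)
    (M i : ℕ) (hi : n ≤ i) (hiM : i < M) :
    ∑ j ∈ Finset.range M, (a ((i:ℤ) - j) : ℂ) * c ^ j
      = c ^ i * ∑ k ∈ Finset.range (n+1), (a k : ℂ) * (c⁻¹) ^ k := by
  symm
  rw [Finset.mul_sum]
  refine Finset.sum_of_injOn (fun k => i - k) ?_ ?_ ?_ ?_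
  · intro x hx y hy hxy
    simp at hx hy hxy
    omega
  · intro x hx
    simp at hx ⊢
    omega
  · intro j hj hj2
    rw [hs]
    · simp
    by_contra hcon
    push Not at hcon
    apply hj2
    refine ⟨i - j, ?_, ?_⟩
    · simp; omega
    · simp; omega
  · intro k hk
    simp at hk
    have : i - (i - k) = k := by omega
    rw [Nat.cast_sub (by omega)]
    have h2 : c ^ i = c ^ (i - k) * c ^ k := by rw [← pow_add]; congr 1; omega
    rw [h2]
    simp
    field_simp

theorem sign_sin {y : ℝ} (hy : 0 ≤ y) : 0 ≤ (-1:ℝ)^(⌊y / Real.pi⌋₊) * Real.sin y := by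
  rw [← Real.sin_sub_nat_mul_pi]
  have h1 := Nat.floor_le (div_nonneg hy Real.pi_pos.le)
  have h2 := Nat.lt_floor_add_one (y / Real.pi)
  rw [le_div_iff₀ Real.pi_pos] at h1
  rw [div_lt_iff₀ Real.pi_pos] at h2
  apply Real.sin_nonneg_of_nonneg_of_le_pi <;> linarith

theorem no_upper_root {a : ℤ → ℝ} (ha : IsTNKernel fun i j : ℤ => a (i - j)) {n : ℕ}
    (hs : ∀ k : ℤ, k < 0 ∨ (n:ℤ) < k → a k = 0)
    (t : ℝ) (ht : t < 0) (htp : ∑ k ∈ Finset.range (n+1), a k * t ^ k ≠ 0)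
    (w : ℂ) (hw : 0 < w.im) : ∑ k ∈ Finset.range (n+1), (a k : ℂ) * (w⁻¹) ^ k ≠ 0 := by
  intro hroot
  have hw0 : w ≠ 0 := by rintro rfl; simp at hw
  set φ := w.arg with hφ
  have hφ0 : 0 ≤ φ := Complex.arg_nonneg_iff.2 hw.le
  have hφπ : φ < Real.pi := by
    rw [Complex.arg_lt_pi_iff]; right; exact hw.ne'
  obtain ⟨α, hα0, hα⟩ : ∃ α : ℝ, 0 < α ∧ ∀ j : ℕ, Real.sin (j * φ + α) ≠ 0 := by
    have hcount : (⋃ j : ℕ, ⋃ m : ℤ, {(m:ℝ) * Real.pi - j * φ}).Countable :=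
      Set.countable_iUnion fun j => Set.countable_iUnion fun m => Set.countable_singleton _
    obtain ⟨α, h1, h2⟩ := (hcount.dense_compl ℝ).exists_mem_open isOpen_Ioi (Set.nonempty_Ioi (a := (0:ℝ)))
    refine ⟨α, h2, fun j hj => h1 ?_⟩
    obtain ⟨m, hm⟩ := Real.sin_eq_zero_iff.1 hj
    simp only [Set.mem_iUnion, Set.mem_singleton_iff]
    exact ⟨j, m, by linarith⟩
  obtain ⟨B, hB⟩ := exists_nat_gt ((n * φ + α) / (Real.pi - φ))
  rw [div_lt_iff₀ (by linarith)] at hB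
  set M := n + B + 1 with hM
  set m : ℕ → ℕ := fun j => ⌊(j * φ + α) / Real.pi⌋₊ with hm
  have hmono : Monotone m := by
    intro i j hij
    apply Nat.floor_le_floor
    have : (i:ℝ) ≤ j := by exact_mod_cast hij
    have := Real.pi_pos
    gcongr
  have hmB : ∀ j < M, m j < B := by
    intro j hj
    rw [Nat.floor_lt (by have := Real.pi_pos; positivity), div_lt_iff₀ Real.pi_pos]
    have : (j:ℝ) ≤ n + B := by exact_mod_cast (by omega : j ≤ n + B)
    nlinarith
  set u : ℕ → ℝ := fun j => (w ^ j * Complex.exp (α * Complex.I)).im with hu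
  have hu2 : ∀ j, u j = ‖w‖ ^ j * Real.sin (j * φ + α) := by
    intro j
    have : w ^ j * Complex.exp (α * Complex.I) =
        ((‖w‖ ^ j : ℝ) : ℂ) * Complex.exp (((j * φ + α : ℝ) : ℂ) * Complex.I) := by
      conv_lhs => rw [← Complex.norm_mul_exp_arg_mul_I w]
      rw [mul_pow, ← Complex.exp_nat_mul, mul_assoc, ← Complex.exp_add]
      push_cast
      congr 2
      ring
    rw [hu]
    simp only
    rw [this, Complex.im_ofReal_mul, Complex.exp_ofReal_mul_I_im]
  have hwn : 0 < ‖w‖ := norm_pos_iff.2 hw0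
  have hune : ∀ j, u j ≠ 0 := fun j => by
    rw [hu2]; exact mul_ne_zero (pow_pos hwn j).ne' (hα j)
  have husgn : ∀ j, 0 < (-1:ℝ)^(m j) * u j := by
    intro j
    refine lt_of_le_of_ne ?_ (mul_ne_zero (by positivity) (hune j)).symm
    rw [hu2]
    have := sign_sin (y := j * φ + α) (by positivity)
    have h2 := mul_nonneg (pow_pos hwn j).le this
    simp only [hm]
    linarith
  set Q := ∑ k ∈ Finset.range (n+1), a k * t ^ k with hQ
  set κ := (t⁻¹)^n * Q with hκ
  have hκ0 : κ ≠ 0 := mul_ne_zero (pow_ne_zero _ (inv_ne_zero ht.ne)) htp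
  obtain ⟨η, hη0, hη⟩ : ∃ η : ℝ, 0 < η ∧ ∀ j ∈ Finset.range M,
      0 < (-1:ℝ)^(m j) * (u j + η * κ * (t⁻¹)^j) := by
    have : ∀ᶠ η in nhdsWithin (0:ℝ) (Set.Ioi 0), ∀ j ∈ Finset.range M,
      0 < (-1:ℝ)^(m j) * (u j + η * κ * (t⁻¹)^j) := by
      rw [Filter.eventually_all_finset]
      intro j _
      have hcont : Continuous fun η : ℝ => (-1:ℝ)^(m j) * (u j + η * κ * (t⁻¹)^j) := by fun_prop
      have := hcont.tendsto 0
      simp only [zero_mul, add_zero] at this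
      exact (this.mono_left nhdsWithin_le_nhds).eventually_const_lt (husgn j)
    obtain ⟨η, h1, h2⟩ := (this.and self_mem_nhdsWithin).exists
    exact ⟨η, h2, h1⟩
  set x : ℕ → ℝ := fun j => u j + η * κ * (t⁻¹)^j with hx
  have hxabs : ∀ j ∈ Finset.range M, |x j| * (-1:ℝ)^(m j) = x j := by
    intro j hj
    have h1 := hη j hj
    have h2 : |x j| = (-1:ℝ)^(m j) * x j := by
      rw [← abs_of_pos h1, abs_mul, abs_pow]; simp [x]
    rw [h2]
    have : ((-1:ℝ)^(m j))*((-1:ℝ)^(m j)) = 1 := by rw [← mul_pow]; simp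
    linear_combination x j * this
  have hconv : ∀ i, n ≤ i → i < M → ∑ j ∈ Finset.range M, a ((i:ℤ) - j) * x j
      = η * κ * ((t⁻¹)^i * Q) := by
    intro i hi hiM
    have c1 := conv_geom hs w hw0 M i hi hiM
    rw [hroot, mul_zero] at c1
    have c2 := conv_geom hs ((t⁻¹ : ℝ) : ℂ) (by exact_mod_cast inv_ne_zero ht.ne) M i hi hiM
    have c2' : ∑ j ∈ Finset.range M, a ((i:ℤ) - j) * (t⁻¹) ^ j = (t⁻¹)^i * Q := by
      rw [← Complex.ofReal_inv, inv_inv] at c2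
      exact_mod_cast c2
    have c1' : ∑ j ∈ Finset.range M, a ((i:ℤ) - j) * u j = 0 := by
      have := congrArg (fun z => (z * Complex.exp (α * Complex.I)).im) c1
      simp only [zero_mul, Complex.zero_im, Finset.sum_mul, Complex.im_sum] at this
      rw [← this]
      refine Finset.sum_congr rfl fun j _ => ?_
      rw [mul_assoc, Complex.im_ofReal_mul]
    simp only [x, mul_add, Finset.sum_add_distrib, c1', zero_add]
    rw [← c2', Finset.mul_sum]
    refine Finset.sum_congr rfl fun j _ => by ring
  refine var_dim B _ (fun b => (-1:ℝ)^(b:ℕ))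
    (block_tn ha M (B+1) B n m hmono (fun j => |x j|) (fun j => abs_nonneg _)) ?_
  intro r
  have key : ∑ b : Fin B, (∑ j ∈ (Finset.range M).filter (fun j => m j = b),
      |x j| * a (((n + r : ℕ) : ℤ) - j)) * (-1:ℝ)^(b:ℕ) = η * κ * ((t⁻¹)^(n+r : ℕ) * Q) := by
    rw [← hconv (n + r) (by omega) (by omega)]
    rw [Fin.sum_univ_eq_sum_range (fun b => (∑ j ∈ (Finset.range M).filter (fun j => m j = b),
      |x j| * a (((n + r : ℕ) : ℤ) - j)) * (-1:ℝ)^b) B]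
    rw [← Finset.sum_fiberwise_of_maps_to (s := Finset.range M) (t := Finset.range B) (g := m)
      (fun j hj => by simpa using hmB j (by simpa using hj))]
    refine Finset.sum_congr rfl fun b _ => ?_
    rw [Finset.sum_mul]
    refine Finset.sum_congr rfl fun j hj => ?_
    simp only [Finset.mem_filter] at hj
    rw [← hj.2]
    linear_combination a (((n + r : ℕ) : ℤ) - j) * hxabs j hj.1
  rw [key]
  have e1 : (-1:ℝ)^(r:ℕ) * (η * κ * ((t⁻¹)^(n+r : ℕ) * Q)) = η * κ^2 * (-t⁻¹)^(r:ℕ) := by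
    rw [pow_add, neg_pow (t⁻¹), hκ]; ring
  rw [e1]
  have : 0 < -t⁻¹ := by have := inv_lt_zero.2 ht; linarith
  positivity

open Polynomial in
theorem newton_seq {a : ℤ → ℝ} (ha : IsTNKernel fun i j : ℤ => a (i - j)) {n : ℕ}
    (hs : ∀ k : ℤ, k < 0 ∨ (n:ℤ) < k → a k = 0) (k : ℕ) :
    ((k:ℝ)+2) * a k * a (k+2) ≤ (k+1) * a (k+1)^2 := by
  set p : ℝ[X] := ∑ k ∈ Finset.range (n+1), C (a k) * X ^ k with hp
  have hcoeff : ∀ k : ℕ, p.coeff k = a k := by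
    intro k
    simp only [hp, finsetSum_coeff, coeff_C_mul, coeff_X_pow]
    simp only [mul_ite, mul_one, mul_zero, Finset.sum_ite_eq, Finset.mem_range]
    split_ifs with h
    · rfl
    · exact (hs k (Or.inr (by omega))).symm
  have hsplit : p.Splits := by
    by_cases hp0 : p = 0
    · rw [hp0]; exact Splits.zero
    obtain ⟨t, ht, htp⟩ : ∃ t : ℝ, t < 0 ∧ p.eval t ≠ 0 := by
      by_contra hcon
      push Not at hcon
      exact hp0 (eq_zero_of_infinite_isRoot p ((Set.Iio_infinite (0:ℝ)).mono fun t ht => hcon t ht))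
    refine Splits.of_splits_map_of_injective (i := Complex.ofRealHom) Complex.ofReal_injective
      (IsAlgClosed.splits _) ?_
    intro z hz
    have hz : (p.map Complex.ofRealHom).eval z = 0 := (mem_roots'.1 hz).2
    have hz' : ∑ k ∈ Finset.range (n+1), (a k : ℂ) * z ^ k = 0 := by
      rw [← hz, hp]
      simp [Polynomial.map_sum, eval_finsetSum]
    have htp' : ∑ k ∈ Finset.range (n+1), a k * t ^ k ≠ 0 := by
      convert htp using 1
      simp [hp, eval_finsetSum]
    have key := no_upper_root ha hs t ht htp'
    have him : z.im = 0 := by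
      rcases lt_trichotomy z.im 0 with h | h | h
      · exfalso
        refine key z⁻¹ ?_ (by simpa using hz')
        rw [Complex.inv_im]
        have : 0 < Complex.normSq z := Complex.normSq_pos.2 (by rintro rfl; simp at h)
        exact div_pos (by linarith) this
      · exact h
      · exfalso
        have : 0 < Complex.normSq z := Complex.normSq_pos.2 (by rintro rfl; simp at h)
        refine key ((starRingEnd ℂ) z)⁻¹ ?_ ?_
        · rw [Complex.inv_im, Complex.normSq_conj]
          exact div_pos (by simpa using h) this
        · have := congrArg (starRingEnd ℂ) hz'
          simpa [map_sum] using this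
    exact ⟨z.re, by apply Complex.ext <;> simp [him]⟩
  have := newton_ineq hsplit k
  rw [hcoeff, hcoeff, hcoeff] at this
  exact_mod_cast this

theorem newton_grid {f : ℝ → ℝ} (h : IsTNKernel fun x y : ℝ => f (x - y)) {x₀ x₁ : ℝ}
    (h0 : ∀ x, x < x₀ → f x = 0) (h1 : ∀ x, x₁ < x → f x = 0) {s η : ℝ} (hs : s ≤ x₀) (hη : 0 < η)
    (k : ℕ) : ((k:ℝ)+2) * f (s + k * η) * f (s + (k+2) * η) ≤ (k+1) * f (s + (k+1) * η)^2 := by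
  obtain ⟨n, hn⟩ := exists_nat_gt ((x₁ - s) / η)
  rw [div_lt_iff₀ hη] at hn
  have := newton_seq (a := fun k : ℤ => f (s + k * η)) (n := n) ?_ ?_ k
  · push_cast at this; exact this
  · intro m x y hx hy
    have := h m (fun i => s + x i * η) (fun i => y i * η)
      (fun i j hij => by
        have : (x i : ℝ) < x j := by exact_mod_cast hx hij
        simp only; gcongr)
      (fun i j hij => by
        have : (y i : ℝ) < y j := by exact_mod_cast hy hij
        simp only; gcongr)
    convert this using 3
    ext i j
    push_cast
    ring_nf
  · intro k hk
    rcases hk with hk | hk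
    · apply h0
      have : (k:ℝ) < 0 := by exact_mod_cast hk
      nlinarith
    · apply h1
      have : (n:ℝ) < k := by exact_mod_cast hk
      nlinarith

theorem not_compact {f : ℝ → ℝ} (h : IsTNKernel fun x y : ℝ => f (x - y)) {x₀ x₁ : ℝ}
    (h0 : ∀ x, x < x₀ → f x = 0) (h1 : ∀ x, x₁ < x → f x = 0) {a b : ℝ} (hab : a < b)
    (ha : f a ≠ 0) (hb : f b ≠ 0) : False := by
  set δ := (b - a) / 2 with hδ
  have hδ0 : 0 < δ := by simp only [hδ]; linarith
  obtain ⟨T, hT⟩ := exists_nat_gt ((a - x₀) / δ)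
  rw [div_lt_iff₀ hδ0] at hT
  have hpos : ∀ x, a ≤ x → x ≤ b → 0 < f x := fun x hx hx' =>
    (tn_nonneg h x).lt_of_ne' (tn_supp h hx hx' ha hb)
  have hv : 0 < f (a + δ) := hpos _ (by linarith) (by simp only [hδ]; linarith)
  have ha' : 0 < f a := hpos _ le_rfl hab.le
  have hb' : 0 < f b := hpos _ hab.le le_rfl
  set q : ℝ := ((T:ℝ)+1)/(T+2) with hq
  have hq0 : 0 < q := by positivity
  have hq1 : q < 1 := by rw [hq, div_lt_one (by positivity)]; linarith
  obtain ⟨m', hm'⟩ := exists_pow_lt_of_lt_one (show 0 < (f b / f (a+δ)) / (f (a+δ) / f a) by positivity) hq1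
  set m := m' + 1 with hm
  have hmq : q ^ m < (f b / f (a+δ)) / (f (a+δ) / f a) :=
    lt_of_le_of_lt (pow_le_pow_of_le_one hq0.le hq1.le (by omega)) hm'
  rw [lt_div_iff₀ (by positivity)] at hmq
  set η := δ / m with hη
  have hm0 : (0:ℝ) < m := by simp only [hm]; positivity
  have hη0 : 0 < η := by positivity
  have hmη : m * η = δ := by simp only [hη]; field_simp
  set s := a - T * δ with hs
  set A : ℕ → ℝ := fun k => f (s + k * η) with hA
  have hApos : ∀ k, T * m ≤ k → k ≤ (T+2) * m → 0 < A k := by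
    intro k hk1 hk2
    have e1 : ((T:ℝ) * m) ≤ k := by exact_mod_cast hk1
    have e2 : (k:ℝ) ≤ (T+2)*m := by exact_mod_cast hk2
    apply hpos
    · have := mul_le_mul_of_nonneg_right e1 hη0.le
      rw [mul_assoc, hmη] at this
      simp only [hs]; linarith
    · have := mul_le_mul_of_nonneg_right e2 hη0.le
      rw [mul_assoc, hmη] at this
      have : b = a + 2 * δ := by simp only [hδ]; ring
      simp only [hs]; linarith
  set r : ℕ → ℝ := fun k => A (k+1) / A k with hr
  have hstep : ∀ k, T * m ≤ k → k + 2 ≤ (T+2) * m → ((k:ℝ)+2) * r (k+1) ≤ (k+1) * r k := by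
    intro k hk1 hk2
    have p0 := hApos k hk1 (by omega)
    have p1 := hApos (k+1) (by omega) (by omega)
    have := newton_grid h h0 h1 (s := s) (η := η) (by simp only [hs]; linarith) hη0 k
    have e : ((k:ℝ)+2) * A k * A (k+2) ≤ (k+1) * A (k+1)^2 := by
      simp only [hA]; push_cast; exact this
    simp only [hr]
    rw [← mul_div_assoc, ← mul_div_assoc, div_le_div_iff₀ p1 p0]
    nlinarith
  have hchain : ∀ j k, T * m ≤ k → k + j + 1 ≤ (T+2) * m →
      ((k + j : ℕ) + 1 : ℝ) * r (k+j) ≤ (k+1) * r k := by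
    intro j
    induction j with
    | zero => intro k _ _; simp
    | succ j ih =>
      intro k hk1 hk2
      refine le_trans ?_ (ih k hk1 (by omega))
      have := hstep (k+j) (by omega) (by omega)
      push_cast at this ⊢
      rw [← add_assoc k j 1]
      linarith
  have hcomp : ∀ i ∈ Finset.range m, r (T*m + i + m) ≤ q * r (T*m+i) := by
    intro i hi
    have hi : i < m := by simpa using hi
    have e2 : (T+2)*m = T*m + m + m := by ring
    have := hchain m (T*m+i) (by omega) (by omega)
    have rpos : 0 < r (T*m+i) := div_pos (hApos _ (by omega) (by omega)) (hApos _ (by omega) (by omega))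
    have hi' : (i:ℝ) + 1 ≤ m := by exact_mod_cast hi
    push_cast at this
    have h3 : ((T:ℝ)*m+i+1) ≤ q * (T*m+i+m+1) := by
      rw [hq, div_mul_eq_mul_div, le_div_iff₀ (by positivity)]
      nlinarith
    have h4 : ((T:ℝ)*m+i+m+1) * r (T*m+i+m) ≤ (T*m+i+m+1) * (q * r (T*m+i)) := by
      refine this.trans ?_
      have := mul_le_mul_of_nonneg_right h3 rpos.le
      linarith
    exact le_of_mul_le_mul_left h4 (by positivity)
  have e2 : (T+2)*m = T*m + m + m := by ring
  have hprod := Finset.prod_le_prod (s := Finset.range m) (fun i hi => by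
    have hi : i < m := by simpa using hi
    exact (div_pos (hApos _ (by omega) (by omega)) (hApos _ (by omega) (by omega))).le) hcomp
  rw [Finset.prod_mul_distrib, Finset.prod_const, Finset.card_range] at hprod
  have tele : ∀ (c : ℕ), T * m ≤ c → c + m ≤ (T+2)*m → ∏ i ∈ Finset.range m, r (c + i) = A (c+m) / A c := by
    intro c hc1 hc2
    have : ∀ j, c + j ≤ (T+2)*m → ∏ i ∈ Finset.range j, r (c + i) = A (c+j) / A c := by
      intro j
      induction j with
      | zero => intro hj; simp; exact (div_self (hApos c hc1 (by omega)).ne').symm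
      | succ j ih =>
        intro hj
        rw [Finset.prod_range_succ, ih (by omega)]
        have := (hApos (c+j) (by omega) (by omega)).ne'
        simp only [hr]
        rw [← add_assoc]
        field_simp
    exact this m hc2
  have t1 := tele (T*m) le_rfl (by omega)
  have t2 := tele (T*m+m) (by omega) (by omega)
  have t2' : ∏ i ∈ Finset.range m, r (T*m + i + m) = A (T*m+m+m) / A (T*m+m) := by
    rw [← t2]; refine Finset.prod_congr rfl fun i _ => by congr 1; ring
  rw [t1, t2'] at hprod
  have a1 : A (T*m) = f a := by
    simp only [hA, hs]; congr 1; push_cast; rw [mul_assoc, hmη]; ring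
  have a2 : A (T*m+m) = f (a+δ) := by
    simp only [hA, hs]; congr 1; push_cast; rw [add_mul, mul_assoc, hmη]; ring
  have a3 : A (T*m+m+m) = f b := by
    simp only [hA, hs]; congr 1; push_cast; rw [add_mul, add_mul, mul_assoc, hmη]
    simp only [hδ]; ring
  rw [a1, a2, a3] at hprod
  linarith

theorem supp_upper {f : ℝ → ℝ} (h : IsTNKernel fun x y : ℝ => f (x - y)) {x₀ : ℝ}
    (h0 : ∀ x, x < x₀ → f x = 0) {a b : ℝ} (hab : a ≠ b)
    (ha : f a ≠ 0) (hb : f b ≠ 0) : IsUpperSet {x | f x ≠ 0} := by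
  intro c d hcd hc
  by_contra hd
  have hd : f d = 0 := by simpa using hd
  have h1 : ∀ x, d < x → f x = 0 := fun x hx => by
    by_contra hx'
    exact tn_supp h hcd hx.le hc hx' hd
  rcases lt_or_gt_of_ne hab with hab | hab
  · exact not_compact h h0 h1 hab ha hb
  · exact not_compact h h0 h1 hab hb ha

theorem supp_classify {f : ℝ → ℝ} (h : IsTNKernel fun x y : ℝ => f (x - y)) (hs : OneSided f)
    {a b : ℝ} (hab : a ≠ b) (ha : f a ≠ 0) (hb : f b ≠ 0) :
    ∃ x₀, (IsUpperSet {x | f x ≠ 0} ∧ ∀ x, x < x₀ → f x = 0) ∨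
      (IsLowerSet {x | f x ≠ 0} ∧ ∀ x, x₀ < x → f x = 0) := by
  obtain ⟨x₀, h0 | h0⟩ := hs
  · exact ⟨x₀, Or.inl ⟨supp_upper h h0 hab ha hb, h0⟩⟩
  · refine ⟨x₀, Or.inr ⟨?_, h0⟩⟩
    have := supp_upper (f := fun x => f (-x)) (tn_reflect h) (x₀ := -x₀)
      (fun x hx => h0 _ (by linarith)) (a := -a) (b := -b) (by simpa using hab)
      (by simpa using ha) (by simpa using hb)
    intro c d hcd hc
    have := this (a := -c) (b := -d) (by linarith) (by simpa using hc)
    simpa using this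

open MeasureTheory in
theorem tn_blocks {f : ℝ → ℝ} (h : IsTNKernel fun x y : ℝ => f (x - y))
    (hi : ∀ a b : ℝ, IntervalIntegrable f volume a b) {n : ℕ} (x : Fin n → ℝ) (hx : StrictMono x)
    (z : ℕ → ℝ) (hz : StrictMono z) :
    0 ≤ (Matrix.of fun i j : Fin n => ∫ v in z j..z (j+1), f (x i - v)).det := by
  let μ : Fin n → Measure ℝ := fun j => volume.restrict (Set.Ioc (z j) (z (j+1)))
  have hII : ∀ i j : Fin n, Integrable (fun v => f (x i - v)) (μ j) := by
    intro i j
    have := (hi (x i - z j) (x i - z (j+1))).comp_sub_left (x i)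
    simp only [sub_sub_cancel] at this
    exact (intervalIntegrable_iff_integrableOn_Ioc_of_le (hz (Nat.lt_succ_self _)).le).1 this
  have key : (Matrix.of fun i j : Fin n => ∫ v in z j..z (j+1), f (x i - v)).det
      = ∫ v : Fin n → ℝ, (Matrix.of fun i j : Fin n => f (x i - v j)).det ∂(Measure.pi μ) := by
    simp only [Matrix.det_apply', Matrix.of_apply]
    rw [integral_finsetSum]
    · refine Finset.sum_congr rfl fun σ _ => ?_
      rw [integral_const_mul, integral_fintype_prod_eq_prod (fun i v => f (x (σ i) - v))]
      congr 1
      refine Finset.prod_congr rfl fun j _ => ?_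
      rw [intervalIntegral.integral_of_le (hz (Nat.lt_succ_self _)).le]
    · intro σ _
      exact (Integrable.fintype_prod (f := fun i v => f (x (σ i) - v)) (fun j => hII _ j)).const_mul _
  rw [key]
  apply integral_nonneg_of_ae
  have hae : ∀ᵐ v ∂(Measure.pi μ), ∀ j : Fin n, v j ∈ Set.Ioc (z j) (z (j+1)) := by
    rw [eventually_countable_forall]
    intro j
    exact Measure.tendsto_eval_ae_ae.eventually (ae_restrict_mem measurableSet_Ioc)
  filter_upwards [hae] with v hv
  refine h n x v hx ?_
  intro i j hij
  refine (hv i).2.trans_lt (lt_of_le_of_lt (hz.monotone ?_) (hv j).1)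
  exact hij

open MeasureTheory in
theorem tn_int {f : ℝ → ℝ} (h : IsTNKernel fun x y : ℝ => f (x - y))
    (h0 : ∀ u, u ≤ 0 → f u = 0)
    (hi : ∀ a b : ℝ, IntervalIntegrable f volume a b) :
    IsTNKernel fun x y : ℝ => ∫ u in (0:ℝ)..(x - y), f u := by
  intro n x y hx hy
  obtain ⟨Y, hY⟩ : ∃ Y : ℝ, ∀ i, x i ≤ Y ∧ y i < Y := by
    refine ⟨∑ i, |x i| + ∑ i, |y i| + 1, fun i => ?_⟩
    have h1 := Finset.single_le_sum (f := fun i => |x i|) (fun i _ => abs_nonneg _) (Finset.mem_univ i)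
    have h2 := Finset.single_le_sum (f := fun i => |y i|) (fun i _ => abs_nonneg _) (Finset.mem_univ i)
    have h3 : 0 ≤ ∑ i, |x i| := Finset.sum_nonneg fun i _ => abs_nonneg _
    have h4 : 0 ≤ ∑ i, |y i| := Finset.sum_nonneg fun i _ => abs_nonneg _
    have := le_abs_self (x i)
    have := le_abs_self (y i)
    constructor <;> linarith
  let z : ℕ → ℝ := fun k => if h : k < n then y ⟨k, h⟩ else Y + k
  have hz : StrictMono z := by
    apply strictMono_nat_of_lt_succ
    intro k
    simp only [z]
    split_ifs with h1 h2 h2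
    · exact hy (by simp)
    · have := (hY ⟨k, h1⟩).2
      push_cast
      have : (0:ℝ) ≤ k := Nat.cast_nonneg _
      linarith
    · omega
    · push_cast; linarith
  let N := (Matrix.of fun i j : Fin n => ∫ v in z j..z (j+1), f (x i - v))
  let L : Matrix (Fin n) (Fin n) ℝ := Matrix.of fun l j => if j ≤ l then 1 else 0
  have hL : L.det = 1 := by
    rw [Matrix.det_of_isLowerTriangular]
    · simp [L]
    · intro i j hij
      have : i < j := hij
      simp [L, this]
  have hI : ∀ i (a b : ℝ), IntervalIntegrable (fun v => f (x i - v)) volume a b := by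
    intro i a b
    have := (hi (x i - a) (x i - b)).comp_sub_left (x i)
    simpa only [sub_sub_cancel] using this
  have hM : (Matrix.of fun i j : Fin n => ∫ u in (0:ℝ)..(x i - y j), f u) = N * L := by
    ext i j
    simp only [Matrix.mul_apply, N, L, Matrix.of_apply, mul_ite, mul_one, mul_zero]
    rw [← Finset.sum_filter]
    have e1 : ∑ l ∈ Finset.univ.filter (fun l : Fin n => j ≤ l), ∫ v in z l..z (l+1), f (x i - v)
        = ∑ l ∈ Finset.Ico (j:ℕ) n, ∫ v in z l..z (l+1), f (x i - v) := by
      refine Finset.sum_bij (fun l _ => (l:ℕ)) ?_ ?_ ?_ ?_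
      · intro a ha; simpa using ha
      · intro a _ b _ hab; exact Fin.ext hab
      · intro b hb
        simp only [Finset.mem_Ico] at hb
        exact ⟨⟨b, hb.2⟩, by
          simp only [Finset.mem_filter, Finset.mem_univ, true_and]
          exact hb.1, rfl⟩
      · intro a _; rfl
    rw [e1, intervalIntegral.sum_integral_adjacent_intervals_Ico j.2.le (fun k _ => hI _ _ _),
      intervalIntegral.integral_comp_sub_left]
    have e2 : z j = y j := by simp [z]
    have e3 : z n = Y + n := by simp [z]
    rw [e2, e3, ← intervalIntegral.integral_add_adjacent_intervals (hi (x i - (Y+n)) 0) (hi 0 _)]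
    suffices e4 : ∫ u in (x i - (Y+n))..0, f u = 0 by rw [e4, zero_add]
    apply intervalIntegral.integral_zero_ae
    refine Filter.Eventually.of_forall fun u hu => h0 u ?_
    rw [Set.uIoc_of_le] at hu
    · exact hu.2
    · have := (hY i).1
      have : (0:ℝ) ≤ n := Nat.cast_nonneg _
      linarith
  rw [hM, Matrix.det_mul, hL, mul_one]
  exact tn_blocks h hi x hx z hz

/-- Admissible test functions. -/
def Adm (Λ : ℝ → ℝ) : Prop :=
  Measurable Λ ∧ MeasureTheory.Integrable Λ ∧ (IsTNKernel fun x y : ℝ => Λ (x - y)) ∧ OneSided Λ ∧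
    ∃ a b : ℝ, a ≠ b ∧ Λ a ≠ 0 ∧ Λ b ≠ 0

theorem tn_ite_mul_exp {g : ℝ → ℝ} (h : IsTNKernel fun x y : ℝ => if 0 < x - y then g (x - y) else 0)
    (α : ℝ) {c : ℝ} (hc : 0 ≤ c) :
    IsTNKernel fun x y : ℝ => if 0 < x - y then c * (Real.exp (α * (x - y)) * g (x - y)) else 0 := by
  have := tn_smul (tn_tilt (f := fun u => if 0 < u then g u else 0) h α) hc
  convert this using 3
  split_ifs <;> simp

theorem tn_prim {g G : ℝ → ℝ} (hg : Continuous g) (hG : ∀ x, HasDerivAt G (g x) x) (hG0 : G 0 = 0)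
    (h : IsTNKernel fun x y : ℝ => if 0 < x - y then g (x - y) else 0) :
    IsTNKernel fun x y : ℝ => if 0 < x - y then G (x - y) else 0 := by
  have := tn_int (f := fun u => if 0 < u then g u else 0) h (fun u hu => by simp [hu.not_gt]) ?_
  · convert this using 3 with x y
    split_ifs with hxy
    · rw [intervalIntegral.integral_congr_ae (g := g), intervalIntegral.integral_eq_sub_of_hasDerivAt
        (fun x _ => hG x) (hg.intervalIntegrable _ _), hG0, sub_zero]
      refine Filter.Eventually.of_forall fun u hu => ?_
      rw [Set.uIoc_of_le hxy.le] at hu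
      simp [hu.1]
    · symm
      apply intervalIntegral.integral_zero_ae
      refine Filter.Eventually.of_forall fun u hu => ?_
      rw [Set.uIoc_of_ge (not_lt.1 hxy)] at hu
      simp [hu.2.not_gt]
  · intro a b
    have := (hg.intervalIntegrable (μ := MeasureTheory.volume) a b)
    rw [intervalIntegrable_iff] at this ⊢
    have h2 := this.indicator (measurableSet_Ioi (a := (0:ℝ)))
    convert h2 using 1
    ext u; simp [Set.indicator]

theorem adm_of {g : ℝ → ℝ} (hg : Continuous g)
    (h : IsTNKernel fun x y : ℝ => if 0 < x - y then g (x - y) else 0)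
    (hi : MeasureTheory.IntegrableOn g (Set.Ioi 0)) (h1 : g 1 ≠ 0) (h2 : g 2 ≠ 0) :
    Adm fun u => if 0 < u then g u else 0 := by
  refine ⟨Measurable.ite measurableSet_Ioi hg.measurable measurable_const, ?_, h,
    ⟨0, Or.inl fun x hx => by simp [hx.not_gt]⟩, 1, 2, by norm_num, by simpa using h1, by simpa using h2⟩
  exact (MeasureTheory.integrable_indicator_iff measurableSet_Ioi).2 hi

theorem tn_pos : IsTNKernel fun x y : ℝ => if 0 < x - y then (1:ℝ) else 0 := by
  have := tn_upset (Set.Ioi 0) (isUpperSet_Ioi _)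
  simpa using this

theorem adm_T1 {t : ℝ} (ht : 0 < t) : Adm fun u => if 0 ≤ u then t * Real.exp (-u) else 0 := by
  refine ⟨Measurable.ite measurableSet_Ici (by fun_prop) measurable_const, ?_, ?_,
    ⟨0, Or.inl fun x hx => by simp [hx.not_ge]⟩, 1, 2, by norm_num, ?_, ?_⟩
  · have : MeasureTheory.IntegrableOn (fun u => t * Real.exp (-u)) (Set.Ici 0) := by
      rw [integrableOn_Ici_iff_integrableOn_Ioi]
      have := ((exp_neg_integrableOn_Ioi 0 one_pos).const_mul t)
      simp only [neg_one_mul] at this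
      exact this
    exact (MeasureTheory.integrable_indicator_iff measurableSet_Ici).2 this
  · have := tn_upset (Set.Ici 0) (isUpperSet_Ici _)
    have := tn_smul (tn_tilt (f := fun u => if u ∈ Set.Ici 0 then (1:ℝ) else 0) this (-1)) ht.le
    convert this using 3 with x y
    simp only [Set.mem_Ici]
    split_ifs <;> simp
  · simp [ht.ne']
  · simp [ht.ne']

theorem adm_T2 {t α : ℝ} (ht : 0 < t) (hα : 0 < α) :
    Adm fun u => if 0 < u then t * (Real.exp (-α * u) * u) else 0 := by
  apply adm_of (g := fun u => t * (Real.exp (-α * u) * u)) (by fun_prop)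
  · refine tn_ite_mul_exp (g := fun u => u) ?_ (-α) ht.le
    exact tn_prim (g := fun _ => 1) continuous_const (fun x => hasDerivAt_id' x) rfl tn_pos
  · have := integrableOn_rpow_mul_exp_neg_mul_rpow (s := 1) (p := 1) (b := α) (by norm_num) one_pos hα
    simp only [Real.rpow_one] at this
    refine (this.const_mul t).congr (Filter.Eventually.of_forall fun u => ?_)
    simp only; ring
  · simp [ht.ne']
  · simp [ht.ne']

theorem adm_T3 : Adm fun u => if 0 < u then 1 * (Real.exp (-1 * u) *
    (1 - 3 * Real.exp (-u) + 2 * Real.exp (-(3/2)*u))) else 0 := by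
  have hlt : ∀ u : ℝ, 0 < u → 0 < 1 - 3 * Real.exp (-u) + 2 * Real.exp (-(3/2)*u) := by
    intro u hu
    set w := Real.exp (-u/2) with hw
    have hw0 : 0 < w := Real.exp_pos _
    have hw1 : w < 1 := by rw [hw, Real.exp_lt_one_iff]; linarith
    have e1 : Real.exp (-u) = w^2 := by rw [hw, ← Real.exp_nat_mul]; congr 1; push_cast; ring
    have e2 : Real.exp (-(3/2)*u) = w^3 := by rw [hw, ← Real.exp_nat_mul]; congr 1; push_cast; ring
    rw [e1, e2]
    have : 1 - 3 * w^2 + 2 * w^3 = (1-w)^2*(1+2*w) := by ring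
    rw [this]
    have : 0 < 1 - w := by linarith
    positivity
  apply adm_of (g := fun u => 1 * (Real.exp (-1 * u) *
    (1 - 3 * Real.exp (-u) + 2 * Real.exp (-(3/2)*u)))) (by fun_prop)
  · refine tn_ite_mul_exp (g := fun u => 1 - 3 * Real.exp (-u) + 2 * Real.exp (-(3/2)*u)) ?_ (-1) zero_le_one
    refine tn_prim (G := fun u => 1 - 3 * Real.exp (-u) + 2 * Real.exp (-(3/2)*u)) (g := fun u => 3 * (Real.exp (-1*u) * (1 - Real.exp (-(1/2) * u)))) (by fun_prop) ?_ (by norm_num) ?_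
    · intro x
      have h1 : HasDerivAt (fun u : ℝ => Real.exp (-u)) (Real.exp (-x) * (-1)) x := (hasDerivAt_neg x).exp
      have h2 : HasDerivAt (fun u : ℝ => Real.exp (-(3/2)*u)) (Real.exp (-(3/2)*x) * (-(3/2))) x := by
        have := ((hasDerivAt_id' x).const_mul (-(3/2) : ℝ)).exp
        simpa using this
      refine (((h1.const_mul 3).const_sub 1).add (h2.const_mul 2)).congr_deriv ?_
      have : Real.exp (-(3/2)*x) = Real.exp (-x) * Real.exp (-(1/2)*x) := by
        rw [← Real.exp_add]; congr 1; ring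
      rw [this, neg_one_mul]; ring
    · refine tn_ite_mul_exp (g := fun u => 1 - Real.exp (-(1/2) * u)) ?_ (-1) (by norm_num)
      refine tn_prim (G := fun u => 1 - Real.exp (-(1/2) * u)) (g := fun u => (1/2) * (Real.exp (-(1/2)*u) * 1)) (by fun_prop) ?_ (by norm_num) ?_
      · intro x
        have := ((((hasDerivAt_id' x).const_mul (-(1/2) : ℝ)).exp).const_sub 1)
        refine this.congr_deriv ?_
        ring
      · exact tn_ite_mul_exp (g := fun _ => 1) tn_pos _ (by norm_num)
  · have i1 := exp_neg_integrableOn_Ioi 0 (b := 1) (by norm_num)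
    have i2 := (exp_neg_integrableOn_Ioi 0 (b := 2) (by norm_num)).const_mul 3
    have i3 := (exp_neg_integrableOn_Ioi 0 (b := 5/2) (by norm_num)).const_mul 2
    refine ((i1.sub i2).add i3).congr (Filter.Eventually.of_forall fun u => ?_)
    simp only [Pi.add_apply, Pi.sub_apply]
    have : Real.exp (-2*u) = Real.exp (-1*u) * Real.exp (-u) := by
      rw [← Real.exp_add]; congr 1; ring
    have h2 : Real.exp (-(5/2)*u) = Real.exp (-1*u) * Real.exp (-(3/2)*u) := by
      rw [← Real.exp_add]; congr 1; ring
    rw [this, h2]; ring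
  · have := hlt 1 one_pos
    positivity
  · have := hlt 2 two_pos
    positivity

theorem exists_T2 {p s : ℝ} (hp : 0 < p) (hps : p < s) : ∃ (Λ : ℝ → ℝ) (q : ℝ), Adm Λ ∧
    ContinuousOn Λ (Set.Ioi 0) ∧ 0 < q ∧ q < 1 ∧ (∀ x ≤ 0, Λ x = 0) ∧ (∀ x, 0 ≤ Λ x) ∧
    Λ (1 - q) = p ∧ Λ 1 = s ∧ Λ (1 + q) = p := by
  have hs : 0 < s := hp.trans hps
  set r := p / s with hr
  have hr0 : 0 < r := by positivity
  have hr1 : r < 1 := by rw [hr, div_lt_one hs]; exact hps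
  have hrs : s * r = p := by rw [hr]; field_simp
  set q := Real.sqrt (1 - r^2) with hq
  have hr2 : r^2 < 1 := by nlinarith
  have hqq : q^2 = 1 - r^2 := Real.sq_sqrt (by linarith)
  have hq0 : 0 < q := Real.sqrt_pos.2 (by linarith)
  have hq1 : q < 1 := by nlinarith [sq_nonneg r, pow_pos hr0 2]
  have h1 : 0 < 1 - q := by linarith
  have h2 : 0 < 1 + q := by linarith
  set α := Real.log (r / (1 - q)) / q with hα
  have hrq : 1 - q < r := by
    by_contra hcon
    have : r ^ 2 ≤ (1-q)^2 := by gcongr; exact not_lt.1 hcon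
    nlinarith
  have hα0 : 0 < α := div_pos (Real.log_pos (by rw [lt_div_iff₀ h1]; linarith)) hq0
  have eα : Real.exp (α * q) = r / (1 - q) := by
    rw [hα, div_mul_cancel₀ _ hq0.ne', Real.exp_log (by positivity)]
  have eα' : Real.exp (-(α * q)) = r / (1 + q) := by
    rw [Real.exp_neg, eα, inv_div, div_eq_div_iff hr0.ne' h2.ne']
    nlinarith
  refine ⟨fun u => if 0 < u then (s * Real.exp α) * (Real.exp (-α * u) * u) else 0, q,
    adm_T2 (by positivity) hα0, ?_, hq0, hq1, ?_, ?_, ?_, ?_, ?_⟩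
  · apply ContinuousOn.congr (f := fun u => (s * Real.exp α) * (Real.exp (-α * u) * u))
    · fun_prop
    · intro x hx
      have : 0 < x := hx
      simp [this]
  · intro x hx; simp [hx.not_gt]
  · intro x; dsimp only; split_ifs
    · positivity
    · exact le_rfl
  · simp only [h1, if_true]
    have : Real.exp (-α * (1 - q)) = Real.exp (-α) * Real.exp (α * q) := by
      rw [← Real.exp_add]; congr 1; ring
    rw [this, eα, ← hrs, Real.exp_neg]
    field_simp
  · simp only [one_pos, if_true, mul_one]
    rw [mul_assoc, ← Real.exp_add]; simp
  · simp only [h2, if_true]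
    have : Real.exp (-α * (1 + q)) = Real.exp (-α) * Real.exp (-(α * q)) := by
      rw [← Real.exp_add]; congr 1; ring
    rw [this, eα', ← hrs, Real.exp_neg]
    field_simp

/-- `F` preserves one-sidedness and total non-negativity on admissible functions. -/
def Pres (F : ℝ → ℝ) : Prop :=
  ∀ Λ, Adm Λ → (IsTNKernel fun x y : ℝ => F (Λ (x - y))) ∧ OneSided (F ∘ Λ)

theorem pres_pos {F : ℝ → ℝ} (hF : Pres F) {t : ℝ} (ht : 0 < t) (hFt : F t ≠ 0) :
    F 0 = 0 ∧ ∀ x, 0 < x → F x ≠ 0 := by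
  have hge : ∀ s, t ≤ s → F s ≠ 0 := by
    intro s hs
    rcases hs.eq_or_lt with rfl | hs
    · exact hFt
    obtain ⟨Λ, q, hA, -, hq, -, -, -, h1, h2, h3⟩ := exists_T2 ht hs
    have := tn_supp (f := fun x => F (Λ x)) (hF Λ hA).1 (a := 1 - q) (d := 1) (b := 1 + q)
      (by linarith) (by linarith) (by simpa [h1] using hFt) (by simpa [h3] using hFt)
    simpa [h2] using this
  have h00 : F 0 = 0 := by
    by_contra h0
    have hall : ∀ r, 0 ≤ r → F r ≠ 0 := by
      intro r hr
      rcases hr.eq_or_lt with rfl | hr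
      · exact h0
      rcases le_or_gt t r with h | h
      · exact hge r h
      obtain ⟨Λ, q, hA, -, hq, hq1, hz, -, h1, h2, h3⟩ := exists_T2 hr h
      have := tn_supp (f := fun x => F (Λ x)) (hF Λ hA).1 (a := 0) (d := 1 - q) (b := 1)
        (by linarith) (by linarith) (by simpa [hz] using h0) (by simpa [h2] using hFt)
      simpa [h1] using this
    obtain ⟨Λ, q, hA, -, hq, hq1, hz, hnn, h1, h2, h3⟩ := exists_T2 ht (show t < t + 1 by linarith)
    obtain ⟨x₀, h | h⟩ := (hF Λ hA).2
    · exact hall _ (hnn _) (h (x₀ - 1) (by linarith))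
    · exact hall _ (hnn _) (h (x₀ + 1) (by linarith))
  refine ⟨h00, ?_⟩
  intro r hr
  rcases le_or_gt t r with h | h
  · exact hge r h
  obtain ⟨Λ, q, hA, hc, hq, hq1, hz, -, h1, h2, h3⟩ := exists_T2 hr (show r < 2 * t by linarith)
  obtain ⟨x, hx, hxt⟩ := intermediate_value_Icc' (f := Λ) (show (1:ℝ) ≤ 1 + q by linarith)
    (hc.mono (fun y hy => lt_of_lt_of_le one_pos hy.1)) (show t ∈ Set.Icc _ _ by
      rw [h2, h3]; constructor <;> linarith)
  have hx1 : x ≠ 1 := by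
    rintro rfl; rw [h2] at hxt; linarith
  have := supp_upper (f := fun x => F (Λ x)) (hF Λ hA).1 (x₀ := 0)
    (fun x hx => by simp [hz x hx.le, h00]) hx1 (by simpa [hxt] using hFt)
    (by simpa [h2] using hge _ (by linarith))
  have := this (a := 1) (b := 1 + q) (by linarith) (by simpa [h2] using hge _ (by linarith))
  simpa [h3] using this

theorem pres_mono {F : ℝ → ℝ} (hF : Pres F) (hF0 : ∀ x : ℝ, 0 ≤ x → 0 ≤ F x) {p s : ℝ} (hp : 0 < p)
    (hps : p ≤ s) : F p ≤ F s := by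
  rcases hps.eq_or_lt with rfl | hps
  · exact le_rfl
  obtain ⟨Λ, q, hA, -, hq, -, -, -, h1, h2, h3⟩ := exists_T2 hp hps
  have := tn_exch (f := fun x => F (Λ x)) (hF Λ hA).1 (a := 1 - q) (d := 1) (b := 1 + q)
    (by linarith) (by linarith)
  have e : 1 - q + (1 + q) - 1 = 1 := by ring
  simp only [h1, h2, h3, e] at this
  have := hF0 s (hp.trans hps).le
  nlinarith [hF0 p hp.le]

theorem cont_of_exch {L : ℝ → ℝ} (hanti : Antitone L)
    (hex : ∀ u q δ : ℝ, 0 < q → 0 < δ → L u + L (u + q + δ) ≤ L (u + δ) + L (u + q)) :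
    Continuous L := by
  have hd : ∀ u (δ : ℝ), 0 < δ → ∀ n : ℕ, n * (L u - L (u + δ)) ≤ L u - L (u + n * δ) := by
    intro u δ hδ n
    induction n with
    | zero => simp
    | succ n ih =>
      rcases Nat.eq_zero_or_pos n with rfl | hn
      · simp
      have hn' : (0:ℝ) < n := by exact_mod_cast hn
      have := hex u (n * δ) δ (by positivity) hδ
      push_cast
      have e : u + (n+1) * δ = u + n * δ + δ := by ring
      rw [e]
      linarith
  rw [Metric.continuous_iff]
  intro v ε hε
  obtain ⟨n, hn⟩ := exists_nat_gt ((L v - L (v+1)) / ε)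
  have hn' : (0:ℝ) < n + 1 := by positivity
  refine ⟨1 / (n+1), by positivity, fun x hx => ?_⟩
  set δ : ℝ := 1 / (n+1) with hδ
  have hδ0 : 0 < δ := by positivity
  have h1 := hd v δ hδ0 (n+1)
  push_cast at h1
  have e1 : ((n:ℝ)+1) * δ = 1 := by rw [hδ]; field_simp
  rw [e1] at h1
  rw [div_lt_iff₀ hε] at hn
  have h2 : L v - L (v + δ) < ε := by
    by_contra hcon
    push Not at hcon
    nlinarith
  have h3 := hex (v - δ) δ δ hδ0 hδ0
  have e2 : v - δ + δ = v := by ring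
  rw [e2] at h3
  rw [Real.dist_eq, abs_lt] at hx
  have h4 : L (v + δ) ≤ L x := hanti (by linarith)
  have h5 : L x ≤ L (v - δ) := hanti (by linarith)
  rw [Real.dist_eq, abs_lt]
  constructor <;> linarith

theorem lin_of_eq {L : ℝ → ℝ} (hc : Continuous L)
    (heq : ∀ u q δ : ℝ, 0 < q → 0 < δ → L u + L (u + q + δ) = L (u + δ) + L (u + q)) :
    ∃ A : ℝ, ∀ x, L x = L 0 + x * A := by
  have h1 : ∀ δ, 0 < δ → ∀ u v, L (u + δ) - L u = L (v + δ) - L v := by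
    intro δ hδ
    have : ∀ u v, u < v → L (u + δ) - L u = L (v + δ) - L v := by
      intro u v huv
      have := heq u (v - u) δ (by linarith) hδ
      rw [show u + (v - u) = v by ring] at this
      linarith
    intro u v
    rcases lt_trichotomy u v with h | rfl | h
    · exact this u v h
    · rfl
    · exact (this v u h).symm
  have h2 : ∀ u δ, L (u + δ) - L 0 = (L u - L 0) + (L δ - L 0) := by
    intro u δ
    rcases lt_trichotomy δ 0 with h | rfl | h
    · have a := h1 (-δ) (by linarith) (u + δ) 0
      have b := h1 (-δ) (by linarith) δ 0
      simp only [add_neg_cancel_right, add_neg_cancel, zero_add] at a b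
      linarith
    · simp
    · have := h1 δ h u 0
      simp only [zero_add] at this
      linarith
  let A : ℝ →+ ℝ := ⟨⟨fun x => L x - L 0, by simp⟩, h2⟩
  refine ⟨A 1, fun x => ?_⟩
  have := map_real_smul A (by show Continuous fun x => L x - L 0; fun_prop) x 1
  simp only [smul_eq_mul, mul_one] at this
  rw [← this]
  show L x = L 0 + (L x - L 0)
  ring

open Filter Topology in
theorem pres_power {F : ℝ → ℝ} (hF : Pres F) (hF0 : ∀ x : ℝ, 0 ≤ x → 0 ≤ F x) {t : ℝ} (ht : 0 < t)
    (hFt : F t ≠ 0) : ∃ c β : ℝ, 0 < c ∧ 0 ≤ β ∧ F 0 = 0 ∧ ∀ x, 0 < x → F x = c * x ^ β := by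
  obtain ⟨h00, hne⟩ := pres_pos hF ht hFt
  have hpos : ∀ x, 0 < x → 0 < F x := fun x hx => (hF0 x hx.le).lt_of_ne' (hne x hx)
  let H : ℝ → ℝ := fun x => F (Real.exp (-x))
  have hH : ∀ x, 0 < H x := fun x => hpos _ (Real.exp_pos _)
  have hG : ∀ s : ℝ, IsTNKernel fun x y : ℝ =>
      (fun u => if 0 ≤ u then H (s + u) else 0) (x - y) := by
    intro s
    have := (hF _ (adm_T1 (Real.exp_pos (-s)))).1
    convert this using 3 with x y
    dsimp only [H]
    split_ifs
    · rw [← Real.exp_add]; congr 2; ring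
    · exact h00.symm
  let L : ℝ → ℝ := fun x => Real.log (H x)
  have hanti : Antitone L := by
    intro a b hab
    exact Real.log_le_log (hH b) (pres_mono hF hF0 (Real.exp_pos _) (Real.exp_le_exp.2 (by linarith)))
  have hexH : ∀ u q δ : ℝ, 0 < q → 0 < δ → H u * H (u + q + δ) ≤ H (u + δ) * H (u + q) := by
    intro u q δ hq hδ
    have := tn_exch (f := fun v => if 0 ≤ v then H (u + v) else 0) (hG u) (a := 0) (d := δ) (b := q + δ) hδ (by linarith)
    have e : 0 + (q + δ) - δ = q := by ring
    rw [e] at this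
    simp only [le_refl, if_true, add_zero, hδ.le, hq.le, (add_pos hq hδ).le] at this
    rwa [← add_assoc] at this
  have hlog : ∀ a b, Real.log (H a * H b) = L a + L b := fun a b =>
    Real.log_mul (hH a).ne' (hH b).ne'
  have hex : ∀ u q δ : ℝ, 0 < q → 0 < δ → L u + L (u + q + δ) ≤ L (u + δ) + L (u + q) := by
    intro u q δ hq hδ
    rw [← hlog, ← hlog]
    exact Real.log_le_log (mul_pos (hH _) (hH _)) (hexH u q δ hq hδ)
  have hcL := cont_of_exch hanti hex
  have hHL : ∀ x, H x = Real.exp (L x) := fun x => (Real.exp_log (hH x)).symm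
  have hcH : Continuous H := by
    rw [funext hHL]; exact Real.continuous_exp.comp hcL
  have heqH : ∀ u q δ : ℝ, 0 < q → 0 < δ → H u * H (u + q + δ) = H (u + δ) * H (u + q) := by
    intro u q δ hq hδ
    refine le_antisymm (hexH u q δ hq hδ) ?_
    set s := u - 1 with hs
    have key : ∀ ε ∈ Set.Ioo 0 δ, 0 ≤ H (s + (δ - ε)) * (H (u + ε) * H (u + q) - H u * H (u + q + ε))
        - H s * (H (u + δ) * H (u + q) - H u * H (u + q + δ)) := by
      intro ε hε
      have hh := tn_det3 (f := fun v => if 0 ≤ v then H (s + v) else 0) (hG s) (x1 := -ε) (x2 := 1) (x3 := 1 + q) (y1 := -δ) (y2 := -ε) (y3 := 0)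
        (by linarith [hε.1]) (by linarith) (by linarith [hε.2]) (by linarith [hε.1])
      have := hε.1
      have := hε.2
      have c1 : 0 ≤ -ε - -δ := by linarith
      have c2 : 0 ≤ 1 - -ε := by linarith
      have c3 : 0 ≤ 1 + q - -ε := by linarith
      have c4 : 0 ≤ 1 - -δ := by linarith
      have c5 : 0 ≤ 1 + q - -δ := by linarith
      have c6 : ¬ 0 ≤ -ε - 0 := by linarith
      have c7 : (0:ℝ) ≤ 1 - 0 := by linarith
      have c8 : (0:ℝ) ≤ 1 + q - 0 := by linarith
      have c9 : 0 ≤ -ε - -ε := by linarith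
      simp only [c1, c2, c3, c4, c5, c6, c7, c8, c9, if_true, if_false, zero_mul, add_zero] at hh
      rw [show s + (-ε - -δ) = s + (δ - ε) by rw [hs]; ring,
        show s + (1 - -ε) = u + ε by rw [hs]; ring,
        show s + (1 + q - 0) = u + q by rw [hs]; ring,
        show s + (1 - 0) = u by rw [hs]; ring,
        show s + (1 + q - -ε) = u + q + ε by rw [hs]; ring,
        show s + (-ε - -ε) = s by rw [hs]; ring,
        show s + (1 - -δ) = u + δ by rw [hs]; ring,
        show s + (1 + q - -δ) = u + q + δ by rw [hs]; ring] at hh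
      exact hh
    have hlim : Tendsto (fun ε => H (s + (δ - ε)) * (H (u + ε) * H (u + q) - H u * H (u + q + ε))
        - H s * (H (u + δ) * H (u + q) - H u * H (u + q + δ))) (𝓝[>] 0)
        (𝓝 (H (s + (δ - 0)) * (H (u + 0) * H (u + q) - H u * H (u + q + 0))
        - H s * (H (u + δ) * H (u + q) - H u * H (u + q + δ)))) := by
      refine Tendsto.mono_left (Continuous.tendsto ?_ 0) nhdsWithin_le_nhds
      fun_prop
    have := ge_of_tendsto hlim (by
      filter_upwards [Ioo_mem_nhdsGT hδ] with ε hε using key ε hε)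
    simp only [add_zero, sub_self, mul_zero, zero_sub] at this
    have h3 := hH s
    by_contra hcon
    push Not at hcon
    nlinarith
  have heq : ∀ u q δ : ℝ, 0 < q → 0 < δ → L u + L (u + q + δ) = L (u + δ) + L (u + q) := by
    intro u q δ hq hδ
    rw [← hlog, ← hlog, heqH u q δ hq hδ]
  obtain ⟨A, hA⟩ := lin_of_eq hcL heq
  refine ⟨Real.exp (L 0), -A, Real.exp_pos _, ?_, h00, ?_⟩
  · have := hanti (zero_le_one)
    rw [hA 1] at this
    linarith
  · intro x hx
    have h1 : F x = H (-Real.log x) := by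
      simp only [H, neg_neg, Real.exp_log hx]
    rw [h1, hHL, hA, Real.exp_add, Real.rpow_def_of_pos hx]
    congr 2; ring

theorem excl_lt {F : ℝ → ℝ} (hF : Pres F) {c β : ℝ} (hc : 0 < c) (h0 : F 0 = 0)
    (h : ∀ x, 0 < x → F x = c * x ^ β) (hβ0 : 0 < β) (hβ : β < 1) : False := by
  have hA := (hF _ (adm_T2 one_pos one_pos)).1
  have := tn_det3 (f := fun v => F (if 0 < v then 1 * (Real.exp (-1 * v) * v) else 0)) hA
    (x1 := 2) (x2 := 3) (x3 := 4) (y1 := 0) (y2 := 1) (y3 := 2) (by norm_num) (by norm_num)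
    (by norm_num) (by norm_num)
  norm_num [h0] at this
  have hv : ∀ v : ℝ, 0 < v → F (Real.exp (-v) * v) = c * (Real.exp (-β * v) * v ^ β) := by
    intro v hv
    rw [h _ (by positivity), Real.mul_rpow (by positivity) hv.le, ← Real.exp_mul]
    congr 3; ring
  have hv1 := hv 1 one_pos
  rw [mul_one, mul_one, Real.one_rpow, mul_one] at hv1
  rw [hv 2 two_pos, hv 3 three_pos, hv 4 four_pos, hv1] at this
  have e1 : ∀ n : ℕ, Real.exp (-β * n) = Real.exp (-β) ^ n := by
    intro n; rw [← Real.exp_nat_mul]; congr 1; ring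
  have e2 := e1 2
  have e3 := e1 3
  have e4 := e1 4
  push_cast at e2 e3 e4
  rw [e2, e3, e4] at this
  set E := Real.exp (-β) with hE
  have hE0 : 0 < E := Real.exp_pos _
  have r8 : (8:ℝ)^β = 2^β * 2^β * 2^β := by
    rw [← Real.mul_rpow, ← Real.mul_rpow] <;> norm_num
  have r6 : (6:ℝ)^β = 2^β * 3^β := by
    rw [← Real.mul_rpow] <;> norm_num
  have r4 : (4:ℝ)^β = 2^β * 2^β := by
    rw [← Real.mul_rpow] <;> norm_num
  have hconc := And.right (Real.strictConcaveOn_rpow hβ0 hβ) (show (4:ℝ) ∈ Set.Ici 0 by simp)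
    (show (8:ℝ) ∈ Set.Ici 0 by simp) (by norm_num)
    (show (0:ℝ) < 1/2 by norm_num) (show (0:ℝ) < 1/2 by norm_num) (by norm_num)
  simp only [smul_eq_mul] at hconc
  rw [show (1/2:ℝ)*4 + 1/2*8 = 6 by norm_num] at hconc
  rw [r8, r6, r4] at hconc
  rw [r4] at this
  set A := (2:ℝ)^β
  set B := (3:ℝ)^β
  have h3 : 0 < c^3 * E^6 := by positivity
  have : 0 ≤ (c^3 * E^6) * (A*A*A + A*A - 2 * (A * B)) := by nlinarith
  have := nonneg_of_mul_nonneg_right this h3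
  linarith

open Filter Topology in
theorem taylor2 (β : ℝ) :
    Tendsto (fun w : ℝ => ((1-w)^β - 1 + β*w)/w^2) (𝓝[≠] 0) (𝓝 (β*(β-1)/2)) := by
  have hd : ∀ b w : ℝ, w < 1 → HasDerivAt (fun w : ℝ => (1-w)^b) (-(b * (1-w)^(b-1))) w := by
    intro b w hw
    have h1 : HasDerivAt (fun w : ℝ => 1 - w) (-1) w := by
      simpa using (hasDerivAt_id' w).const_sub 1
    have := h1.rpow_const (p := b) (Or.inl (by linarith))
    refine this.congr_deriv ?_
    ring
  have hlt : ∀ᶠ w : ℝ in 𝓝[≠] 0, w < 1 := nhdsWithin_le_nhds (Iio_mem_nhds one_pos)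
  refine HasDerivAt.lhopital_zero_nhdsNE (f' := fun w => -(β * (1-w)^(β-1)) + β) (g' := fun w => 2 * w)
    ?_ ?_ ?_ ?_ ?_ ?_
  · filter_upwards [hlt] with w hw
    have := ((hd β w hw).sub_const 1).add ((hasDerivAt_id' w).const_mul β)
    refine this.congr_deriv ?_
    ring
  · refine Eventually.of_forall fun w => ?_
    simpa using hasDerivAt_pow 2 w
  · filter_upwards [self_mem_nhdsWithin] with w hw
    have : w ≠ 0 := hw
    simpa using this
  · have : ContinuousAt (fun w : ℝ => (1-w)^β - 1 + β*w) 0 := by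
      have := (hd β 0 one_pos).continuousAt
      fun_prop
    have := this.tendsto
    simp only [sub_zero, Real.one_rpow, sub_self, mul_zero, add_zero] at this
    exact this.mono_left nhdsWithin_le_nhds
  · have : Continuous (fun w : ℝ => w^2) := by fun_prop
    have := this.tendsto 0
    simp only [ne_eq, OfNat.ofNat_ne_zero, not_false_eq_true, zero_pow] at this
    exact this.mono_left nhdsWithin_le_nhds
  · have := (hasDerivAt_iff_tendsto_slope_zero.1 (hd (β-1) 0 one_pos)).const_mul (-β/2)
    simp only [sub_zero, Real.one_rpow, zero_add, smul_eq_mul, mul_one] at this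
    have e : -β / 2 * -(β - 1) = β * (β-1)/2 := by ring
    rw [e] at this
    refine this.congr' ?_
    filter_upwards [self_mem_nhdsWithin] with w hw
    have : w ≠ 0 := hw
    field_simp
    ring

open Filter Topology in
theorem c4_lim (β : ℝ) :
    Tendsto (fun z : ℝ => ((1 - 3*z^2 + 2*z^3)^β - 1 + 3*β*z^2 - 2*β*z^3)/z^4) (𝓝[>] 0)
      (𝓝 (9*β*(β-1)/2)) := by
  have h1 : Tendsto (fun z : ℝ => 3*z^2 - 2*z^3) (𝓝[>] 0) (𝓝[≠] 0) := by
    rw [tendsto_nhdsWithin_iff]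
    constructor
    · have : Continuous (fun z : ℝ => 3*z^2 - 2*z^3) := by fun_prop
      have := this.tendsto 0
      norm_num at this
      exact this.mono_left nhdsWithin_le_nhds
    · filter_upwards [Ioo_mem_nhdsGT (one_pos (α := ℝ))] with z hz
      have : 0 < z^2*(3-2*z) := mul_pos (pow_pos hz.1 2) (by linarith [hz.2])
      have h : 3*z^2 - 2*z^3 = z^2*(3-2*z) := by ring
      show _ ≠ _
      rw [h]; exact this.ne'
  have h2 := (taylor2 β).comp h1
  have h3 : Tendsto (fun z : ℝ => (3-2*z)^2) (𝓝[>] 0) (𝓝 9) := by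
    have : Continuous (fun z : ℝ => (3-2*z)^2) := by fun_prop
    have := this.tendsto 0
    norm_num at this
    exact this.mono_left nhdsWithin_le_nhds
  have h4 := h2.mul h3
  rw [show β*(β-1)/2*9 = 9*β*(β-1)/2 by ring] at h4
  refine h4.congr' ?_
  filter_upwards [Ioo_mem_nhdsGT (one_pos (α := ℝ))] with z hz
  have hz0 : z ≠ 0 := hz.1.ne'
  have h5 : 3 - 2*z ≠ 0 := by linarith [hz.2]
  simp only [Function.comp]
  rw [show 1 - (3*z^2 - 2*z^3) = 1 - 3*z^2 + 2*z^3 by ring, show 3*z^2 - 2*z^3 = z^2*(3-2*z) by ring]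
  generalize (1 - 3*z^2 + 2*z^3)^β = X
  rw [div_mul_eq_mul_div, div_eq_div_iff (by positivity) (by positivity)]
  ring

open Filter Topology in
theorem excl_gt_aux {β : ℝ} (hβ : 1 < β)
    (h : ∀ z ∈ Set.Ioo (0:ℝ) 1, 0 ≤ (Matrix.of fun i j : Fin 4 =>
      (fun z : ℝ => (1 - 3*z^2 + 2*z^3)^β) (z * (1/2)^((i:ℕ)+3-(j:ℕ)))).det) : False := by
  let Φ : ℝ → ℝ := fun z => (1 - 3*z^2 + 2*z^3)^β
  let c4 : ℝ → ℝ := fun z => (Φ z - 1 + 3*β*z^2 - 2*β*z^3)/z^4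
  have hc4 : Tendsto c4 (𝓝[>] 0) (𝓝 (9*β*(β-1)/2)) := c4_lim β
  let a : Fin 4 → ℝ := ![1, 1/4, 1/8, 1/16]
  let V : Matrix (Fin 4) (Fin 4) ℝ := Matrix.of fun i l => (a l)^(i:ℕ)
  let W : Matrix (Fin 4) (Fin 4) ℝ := Matrix.of fun l j => (a l)^(3-(j:ℕ))
  have hV : 0 < V.det := by
    simp [V, a, Matrix.det_succ_row_zero, Fin.sum_univ_succ, Fin.succAbove]
    norm_num
  have hW : 0 < W.det := by
    simp [W, a, Matrix.det_succ_row_zero, Fin.sum_univ_succ, Fin.succAbove]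
    norm_num
  let C : Fin 4 → ℝ := ![1, -3*β, 2*β, 9*β*(β-1)/2]
  let E : ℝ → Matrix (Fin 4) (Fin 4) ℝ := fun z => Matrix.of fun i j =>
    (c4 (z * (1/2)^((i:ℕ)+3-(j:ℕ))) - 9*β*(β-1)/2) * ((1/16)^((i:ℕ)+3-(j:ℕ)))
  have hE : Tendsto E (𝓝[>] 0) (𝓝 0) := by
    refine tendsto_pi_nhds.2 fun i => tendsto_pi_nhds.2 fun j => ?_
    have h1 : Tendsto (fun z : ℝ => z * (1/2)^((i:ℕ)+3-(j:ℕ))) (𝓝[>] 0) (𝓝[>] 0) := by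
      rw [tendsto_nhdsWithin_iff]
      constructor
      · have : Continuous (fun z : ℝ => z * (1/2)^((i:ℕ)+3-(j:ℕ))) := by fun_prop
        have := this.tendsto 0
        rw [zero_mul] at this
        exact this.mono_left nhdsWithin_le_nhds
      · filter_upwards [self_mem_nhdsWithin] with z hz
        have : 0 < z := hz
        rw [Set.mem_Ioi]
        positivity
    have := ((hc4.comp h1).sub_const (9*β*(β-1)/2)).mul_const ((1/16)^((i:ℕ)+3-(j:ℕ)))
    rw [sub_self, zero_mul] at this
    exact this
  let e : Fin 4 → ℕ := ![0, 2, 3, 4]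
  let R : ℝ → Matrix (Fin 4) (Fin 4) ℝ := fun z =>
    Matrix.diagonal (fun l => z^(4 - e l)) * (V⁻¹ * E z * W⁻¹)
  have hR : Tendsto (fun z => (Matrix.diagonal C + R z).det) (𝓝[>] 0) (𝓝 (Matrix.diagonal C).det) := by
    have hz : Tendsto (fun z : ℝ => z) (𝓝[>] 0) (𝓝 0) := nhdsWithin_le_nhds
    have hcont : Continuous (fun p : ℝ × Matrix (Fin 4) (Fin 4) ℝ =>
        (Matrix.diagonal C + Matrix.diagonal (fun l => p.1^(4 - e l)) * (V⁻¹ * p.2 * W⁻¹)).det) := by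
      apply Continuous.matrix_det
      refine continuous_const.add (Continuous.matrix_mul (Continuous.matrix_diagonal ?_) ?_)
      · fun_prop
      · exact (continuous_const.matrix_mul continuous_snd).matrix_mul continuous_const
    have := (hcont.tendsto (0, 0)).comp (hz.prodMk_nhds hE)
    simp only [mul_zero, zero_mul, add_zero] at this
    exact this
  have hneg : (Matrix.diagonal C).det < 0 := by
    rw [Matrix.det_diagonal]
    simp only [C, Fin.prod_univ_four]
    simp
    have h1 : 0 < β := by linarith
    have h2 : 0 < β - 1 := by linarith
    have : 0 < 3 * β * (2*β) * (9*β*(β-1)/2) := by positivity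
    nlinarith
  have hev := hR.eventually (gt_mem_nhds hneg)
  obtain ⟨z, hz, hz1⟩ := (hev.and (Ioo_mem_nhdsGT (one_pos (α := ℝ)))).exists
  have hdet := h z hz1
  have hz0 : z ≠ 0 := hz1.1.ne'
  have hM : (Matrix.of fun i j : Fin 4 => Φ (z * (1/2)^((i:ℕ)+3-(j:ℕ))))
      = V * (Matrix.diagonal (fun l => z^(e l)) * (Matrix.diagonal C + R z)) * W := by
    have hSR : Matrix.diagonal (fun l => z^(e l)) * R z = z^4 • (V⁻¹ * E z * W⁻¹) := by
      simp only [R]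
      rw [← Matrix.mul_assoc, Matrix.diagonal_mul_diagonal]
      have : (fun l => z ^ e l * z ^ (4 - e l)) = fun _ => z^4 := by
        funext l
        rw [← pow_add]
        fin_cases l <;> rfl
      rw [this, ← Matrix.smul_eq_diagonal_mul]
    rw [Matrix.mul_add, hSR, Matrix.mul_add, Matrix.add_mul, Matrix.mul_smul, Matrix.smul_mul,
      Matrix.mul_assoc V⁻¹, ← Matrix.mul_assoc V V⁻¹, Matrix.mul_nonsing_inv _ hV.ne'.isUnit, Matrix.one_mul,
      Matrix.mul_assoc (E z), Matrix.nonsing_inv_mul _ hW.ne'.isUnit, Matrix.mul_one,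
      Matrix.diagonal_mul_diagonal]
    ext i j
    rw [Matrix.add_apply, Matrix.mul_apply]
    simp only [Matrix.mul_diagonal, Fin.sum_univ_four, Matrix.smul_apply,
      smul_eq_mul, Matrix.of_apply, V, W, E, c4]
    have hk : ∀ l, a l ^ (i:ℕ) * a l ^ (3 - (j:ℕ)) = a l ^ ((i:ℕ)+3-(j:ℕ)) := by
      intro l
      rw [← pow_add]; congr 1; omega
    set k := (i:ℕ)+3-(j:ℕ)
    have ho : ∀ l (X : ℝ), a l ^ (i:ℕ) * X * a l ^ (3 - (j:ℕ)) = X * a l ^ k := by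
      intro l X
      rw [← hk]; ring
    rw [ho, ho, ho, ho]
    simp only [a, e, C, Matrix.cons_val]
    generalize hX : Φ (z * (1/2)^k) = X
    have p4 : ((1:ℝ)/4)^k = ((1/2)^k)^2 := by rw [← pow_mul, mul_comm, pow_mul]; norm_num
    have p8 : ((1:ℝ)/8)^k = ((1/2)^k)^3 := by rw [← pow_mul, mul_comm, pow_mul]; norm_num
    have p16 : ((1:ℝ)/16)^k = ((1/2)^k)^4 := by rw [← pow_mul, mul_comm, pow_mul]; norm_num
    rw [p4, p8, p16, one_pow]
    have hq : ((1:ℝ)/2)^k ≠ 0 := by positivity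
    generalize ((1:ℝ)/2)^k = q at hq
    field_simp
    ring
  have hd2 : (Matrix.of fun i j : Fin 4 => Φ (z * (1/2)^((i:ℕ)+3-(j:ℕ)))).det
      = V.det * ((∏ l, z^(e l)) * (Matrix.diagonal C + R z).det) * W.det := by
    rw [hM, Matrix.det_mul, Matrix.det_mul, Matrix.det_mul, Matrix.det_diagonal]
  have hp : 0 < ∏ l, z^(e l) := Finset.prod_pos fun l _ => pow_pos hz1.1 _
  have h3 := mul_neg_of_pos_of_neg hp hz
  have h4 := mul_neg_of_neg_of_pos (mul_neg_of_pos_of_neg hV h3) hW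
  rw [← hd2] at h4
  exact absurd hdet (not_le.2 h4)

theorem excl_gt {F : ℝ → ℝ} (hF : Pres F) {c β : ℝ} (hc : 0 < c)
    (h : ∀ x, 0 < x → F x = c * x ^ β) (hβ : 1 < β) : False := by
  refine excl_gt_aux hβ ?_
  intro z hz
  have hA := tn_smul (tn_tilt (f := fun u => F (if 0 < u then 1 * (Real.exp (-1 * u) *
    (1 - 3 * Real.exp (-u) + 2 * Real.exp (-(3/2)*u))) else 0)) (hF _ adm_T3).1 β) (inv_nonneg.2 hc.le)
  have hl2 := Real.log_pos one_lt_two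
  have := hA 4 (fun i => -2 * Real.log z + 2 * Real.log 2 * (i:ℕ)) (fun j => 2 * Real.log 2 * ((j:ℕ) - 3))
    (fun i j hij => by
      have : ((i:ℕ):ℝ) < (j:ℕ) := by exact_mod_cast hij
      simp only; nlinarith)
    (fun i j hij => by
      have : ((i:ℕ):ℝ) < (j:ℕ) := by exact_mod_cast hij
      simp only; nlinarith)
  convert this using 3
  ext i j
  simp only [Matrix.of_apply]
  set k := (i:ℕ)+3-(j:ℕ) with hk
  have hkr : (k:ℝ) = (i:ℕ) + 3 - (j:ℕ) := by
    rw [hk, Nat.cast_sub (by omega)]; push_cast; ring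
  have hu : -2 * Real.log z + 2 * Real.log 2 * ((i:ℕ):ℝ) - 2 * Real.log 2 * (((j:ℕ):ℝ) - 3)
      = -2 * Real.log (z * (1/2)^k) := by
    rw [Real.log_mul hz.1.ne' (by positivity), Real.log_pow, hkr, one_div, Real.log_inv]
    ring
  rw [hu]
  have hw0 : 0 < z * (1/2)^k := mul_pos hz.1 (by positivity)
  have hw1 : z * (1/2)^k < 1 := by
    have : ((1:ℝ)/2)^k ≤ 1 := pow_le_one₀ (by norm_num) (by norm_num)
    nlinarith [hz.1, hz.2]
  generalize z * (1/2)^k = w at hw0 hw1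
  have hlw : Real.log w < 0 := Real.log_neg hw0 hw1
  have e1 : Real.exp (-(-2 * Real.log w)) = w^2 := by
    rw [← Real.exp_log (pow_pos hw0 2), Real.log_pow]; congr 1; push_cast; ring
  have e2 : Real.exp (-(3/2) * (-2 * Real.log w)) = w^3 := by
    rw [← Real.exp_log (pow_pos hw0 3), Real.log_pow]; congr 1; push_cast; ring
  have hg : 0 < 1 - 3*w^2 + 2*w^3 := by
    have : 1 - 3 * w^2 + 2 * w^3 = (1-w)^2*(1+2*w) := by ring
    rw [this]
    have : 0 < 1 - w := by linarith
    positivity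
  have hpos : 0 < -2 * Real.log w := by linarith
  rw [if_pos hpos, e1, e2, one_mul, h _ (by positivity), Real.mul_rpow (by positivity) hg.le, ← Real.exp_mul]
  have e3 : Real.exp (β * (-2 * Real.log w)) * Real.exp (-1 * (-2 * Real.log w) * β) = 1 := by
    rw [← Real.exp_add, Real.exp_eq_one_iff]; ring
  generalize Real.exp (β * (-2 * Real.log w)) = A at *
  generalize Real.exp (-1 * (-2 * Real.log w) * β) = B at *
  generalize (1 - 3*w^2 + 2*w^3)^β = X
  have : c⁻¹ * (A * (c * (B * X))) = (A * B) * X := by field_simp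
  rw [this, e3, one_mul]

theorem core {F : ℝ → ℝ} (hF : Pres F) (hF0 : ∀ x : ℝ, 0 ≤ x → 0 ≤ F x) {t : ℝ} (ht : 0 < t)
    (hFt : F t ≠ 0) : ∃ c : ℝ, 0 < c ∧ ((∀ x : ℝ, 0 ≤ x → F x = c * x) ∨
         (∀ x : ℝ, 0 ≤ x → F x = if 0 < x then c else 0)) := by
  obtain ⟨c, β, hc, hβ, h0, h⟩ := pres_power hF hF0 ht hFt
  refine ⟨c, hc, ?_⟩
  rcases hβ.eq_or_lt with rfl | hβ0
  · right
    intro x hx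
    split_ifs with hx'
    · simp [h x hx']
    · rw [le_antisymm (not_lt.1 hx') hx, h0]
  · rcases lt_trichotomy β 1 with h1 | rfl | h1
    · exact (excl_lt hF hc h0 h hβ0 h1).elim
    · left
      intro x hx
      rcases hx.eq_or_lt with rfl | hx'
      · simp [h0]
      · simp [h x hx']
    · exact (excl_gt hF hc h h1).elim

theorem scale_ok {F f : ℝ → ℝ} {c : ℝ} (hc : 0 < c) (h : ∀ x : ℝ, 0 ≤ x → F x = c * x)
    (hf : IsTNKernel fun x y : ℝ => f (x - y)) : F ∘ f = fun x => c * f x := by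
  funext x; exact h _ (tn_nonneg hf x)

theorem scale_onesided {f : ℝ → ℝ} (hf : OneSided f) (c : ℝ) : OneSided fun x => c * f x := by
  obtain ⟨x₀, h | h⟩ := hf
  · exact ⟨x₀, Or.inl fun x hx => by simp [h x hx]⟩
  · exact ⟨x₀, Or.inr fun x hx => by simp [h x hx]⟩

theorem scale_tn {f : ℝ → ℝ} (hf : IsTNFun f) {c : ℝ} (hc : 0 < c) : IsTNFun fun x => c * f x :=
  ⟨hf.1.const_mul c, tn_smul hf.2 hc.le⟩

open Classical in
theorem ind_ok {F f : ℝ → ℝ} {c : ℝ} (hc : 0 < c)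
    (h : ∀ x : ℝ, 0 ≤ x → F x = if 0 < x then c else 0)
    (hf : IsTNFun f) (hs : OneSided f) (h2 : ∃ a b : ℝ, a ≠ b ∧ f a ≠ 0 ∧ f b ≠ 0) :
    IsTNFun (F ∘ f) ∧ OneSided (F ∘ f) ∧ ∃ a b : ℝ, a ≠ b ∧ F (f a) ≠ 0 ∧ F (f b) ≠ 0 := by
  have hnn := tn_nonneg hf.2
  have hFf : ∀ x, F (f x) = c * if x ∈ {x | f x ≠ 0} then 1 else 0 := by
    intro x
    rw [h _ (hnn x)]
    have : 0 < f x ↔ f x ≠ 0 := (hnn x).lt_iff_ne'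
    simp [this]
  have hm : Measurable (F ∘ f) := by
    have : F ∘ f = fun x => if 0 < f x then c else 0 := by
      funext x; exact h _ (hnn x)
    rw [this]
    exact Measurable.ite (measurableSet_lt measurable_const hf.1) measurable_const measurable_const
  have hz : F 0 = 0 := by simpa using h 0 le_rfl
  refine ⟨⟨hm, ?_⟩, ?_, ?_⟩
  · simp only [Function.comp, hFf]
    obtain ⟨x₀, h3 | h3⟩ := (Exists.elim h2 fun _ h => Exists.elim h fun _ h => supp_classify hf.2 hs h.1 h.2.1 h.2.2)
    · convert tn_smul (tn_upset _ h3.1) hc.le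
    · convert tn_smul (tn_downset _ h3.1) hc.le
  · obtain ⟨x₀, h | h⟩ := hs
    · exact ⟨x₀, Or.inl fun x hx => by simp [h x hx, hz]⟩
    · exact ⟨x₀, Or.inr fun x hx => by simp [h x hx, hz]⟩
  · obtain ⟨a, b, hab, ha, hb⟩ := h2
    exact ⟨a, b, hab, by simp [hFf, ha, hc.ne'], by simp [hFf, hb, hc.ne']⟩

open Classical in
theorem coind_ok {F f : ℝ → ℝ} {c : ℝ} (hc : 0 < c)
    (h : ∀ x : ℝ, 0 ≤ x → F x = if x = 0 then c else 0)
    (hf : IsTNFun f) (hs : OneSided f) (h2 : ∃ a b : ℝ, a ≠ b ∧ f a ≠ 0 ∧ f b ≠ 0) :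
    IsTNFun (F ∘ f) ∧ OneSided (F ∘ f) ∧ ∃ a b : ℝ, a ≠ b ∧ F (f a) ≠ 0 ∧ F (f b) ≠ 0 := by
  have hnn := tn_nonneg hf.2
  have hFf : ∀ x, F (f x) = c * if x ∈ {x | f x ≠ 0}ᶜ then 1 else 0 := by
    intro x
    rw [h _ (hnn x)]
    simp
  have hm : Measurable (F ∘ f) := by
    have : F ∘ f = fun x => if f x = 0 then c else 0 := by
      funext x; exact h _ (hnn x)
    rw [this]
    exact Measurable.ite (measurableSet_eq_fun hf.1 measurable_const) measurable_const measurable_const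
  have hz : F 0 ≠ 0 := by rw [h 0 le_rfl]; simpa using hc.ne'
  obtain ⟨x₀, h3⟩ := (Exists.elim h2 fun _ h => Exists.elim h fun _ h => supp_classify hf.2 hs h.1 h.2.1 h.2.2)
  refine ⟨⟨hm, ?_⟩, ?_, ?_⟩
  · simp only [Function.comp, hFf]
    rcases h3 with h3 | h3
    · convert tn_smul (tn_downset _ h3.1.compl) hc.le
    · convert tn_smul (tn_upset _ h3.1.compl) hc.le
  · obtain ⟨a, b, hab, ha, hb⟩ := h2
    rcases h3 with h3 | h3
    · refine ⟨a, Or.inr fun x hx => ?_⟩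
      have : f x ≠ 0 := h3.1 hx.le ha
      simp [hFf, this]
    · refine ⟨a, Or.inl fun x hx => ?_⟩
      have : f x ≠ 0 := h3.1 hx.le ha
      simp [hFf, this]
  · rcases h3 with h3 | h3
    · exact ⟨x₀ - 1, x₀ - 2, by simp, by rwa [h3.2 _ (by linarith)], by rwa [h3.2 _ (by linarith)]⟩
    · exact ⟨x₀ + 1, x₀ + 2, by simp, by rwa [h3.2 _ (by linarith)], by rwa [h3.2 _ (by linarith)]⟩

theorem ind_ok' {F f : ℝ → ℝ} {c : ℝ} (hc : 0 < c)
    (h : ∀ x : ℝ, 0 ≤ x → F x = if 0 < x then c else 0)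
    (hf : IsTNFun f) (hs : OneSided f) : IsTNFun (F ∘ f) ∧ OneSided (F ∘ f) := by
  by_cases h2 : ∃ a b : ℝ, a ≠ b ∧ f a ≠ 0 ∧ f b ≠ 0
  · have := ind_ok hc h hf hs h2
    exact ⟨this.1, this.2.1⟩
  push Not at h2
  have hnn := tn_nonneg hf.2
  have hz : F 0 = 0 := by simpa using h 0 le_rfl
  obtain ⟨d, hd, hFd⟩ : ∃ d : ℝ, 0 < d ∧ F ∘ f = fun x => d * f x := by
    by_cases h3 : ∃ a, f a ≠ 0
    · obtain ⟨a, ha⟩ := h3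
      have hpa : 0 < f a := (hnn a).lt_of_ne' ha
      refine ⟨c / f a, by positivity, funext fun x => ?_⟩
      by_cases hx : x = a
      · subst hx
        simp only [Function.comp]
        rw [h _ (hnn x), if_pos hpa]; field_simp
      · have : f x = 0 := h2 a x (Ne.symm hx) ha
        simp [this, hz]
    · push Not at h3
      exact ⟨1, one_pos, funext fun x => by simp [h3 x, hz]⟩
  rw [hFd]
  exact ⟨scale_tn hf hd, scale_onesided hs d⟩

theorem stmt_18 (F : ℝ → ℝ) (hF0 : ∀ x : ℝ, 0 ≤ x → 0 ≤ F x) :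
    -- (1) preservers of one-sided Pólya frequency functions
    ((∀ Λ : ℝ → ℝ, IsPolyaFrequencyFunction Λ → OneSided Λ →
        (IsPolyaFrequencyFunction (F ∘ Λ) ∧ OneSided (F ∘ Λ))) ↔
      ∃ c : ℝ, 0 < c ∧ ∀ x : ℝ, 0 ≤ x → F x = c * x) ∧
    -- (2) preservers of one-sided TN functions non-zero at two or more points
    ((∀ f : ℝ → ℝ, IsTNFun f → OneSided f →
        (∃ a b : ℝ, a ≠ b ∧ f a ≠ 0 ∧ f b ≠ 0) →
        (IsTNFun (F ∘ f) ∧ OneSided (F ∘ f) ∧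
          ∃ a b : ℝ, a ≠ b ∧ F (f a) ≠ 0 ∧ F (f b) ≠ 0)) ↔
      ∃ c : ℝ, 0 < c ∧
        ((∀ x : ℝ, 0 ≤ x → F x = c * x) ∨
         (∀ x : ℝ, 0 ≤ x → F x = if 0 < x then c else 0) ∨
         (∀ x : ℝ, 0 ≤ x → F x = if x = 0 then c else 0))) ∧
    -- (3) preservers of one-sided TN functions, for non-zero F
    ((∃ x : ℝ, 0 ≤ x ∧ F x ≠ 0) →
      ((∀ f : ℝ → ℝ, IsTNFun f → OneSided f →
          (IsTNFun (F ∘ f) ∧ OneSided (F ∘ f))) ↔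
        ∃ c : ℝ, 0 < c ∧
          ((∀ x : ℝ, 0 ≤ x → F x = c * x) ∨
           (∀ x : ℝ, 0 ≤ x → F x = if 0 < x then c else 0)))) := by
  refine ⟨⟨fun H => ?_, ?_⟩, ⟨fun H => ?_, ?_⟩, fun hne => ⟨fun H => ?_, ?_⟩⟩
  · have hP : Pres F := fun Λ hA =>
      have := H Λ ⟨hA.2.1, tn_nonneg hA.2.2.1, hA.2.2.2.2, hA.2.2.1⟩ hA.2.2.2.1
      ⟨this.1.2.2.2, this.2⟩
    have hA := adm_T1 one_pos
    have hP1 := H _ ⟨hA.2.1, tn_nonneg hA.2.2.1, hA.2.2.2.2, hA.2.2.1⟩ hA.2.2.2.1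
    have hnotint : ∀ (g : ℝ → ℝ) (c : ℝ), c ≠ 0 → MeasureTheory.Integrable g →
        ∀ S : Set ℝ, MeasurableSet S → MeasureTheory.volume S = ⊤ → (∀ x ∈ S, g x = c) → False := by
      intro g c hc hg S hS hS' hgS
      have h1 : MeasureTheory.IntegrableOn (fun _ => c) S :=
        (MeasureTheory.integrableOn_congr_fun hgS hS).1 hg.integrableOn
      rw [MeasureTheory.integrableOn_const_iff] at h1
      rcases h1 with h1 | h1
      · exact hc (by simpa using h1)
      · simp [hS'] at h1
    by_cases ht : ∃ t, 0 < t ∧ F t ≠ 0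
    · obtain ⟨t, ht, hFt⟩ := ht
      obtain ⟨c, hc, h | h⟩ := core hP hF0 ht hFt
      · exact ⟨c, hc, h⟩
      · exfalso
        refine hnotint _ c hc.ne' hP1.1.1 (Set.Ioi 0) measurableSet_Ioi (by simp) ?_
        intro x hx
        have hx : 0 < x := hx
        simp only [Function.comp, hx.le, if_true, one_mul]
        rw [h _ (Real.exp_pos _).le, if_pos (Real.exp_pos _)]
    · push Not at ht
      exfalso
      by_cases h0 : F 0 = 0
      · obtain ⟨a, b, hab, ha, hb⟩ := hP1.1.2.2.1
        apply ha
        simp only [Function.comp]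
        split_ifs
        · exact ht _ (by positivity)
        · exact h0
      · refine hnotint _ (F 0) h0 hP1.1.1 (Set.Iio 0) measurableSet_Iio (by simp) ?_
        intro x hx
        have hx : x < 0 := hx
        simp [Function.comp, hx.not_ge]
  · rintro ⟨c, hc, h⟩ Λ hΛ hs
    rw [scale_ok hc h hΛ.2.2.2]
    refine ⟨⟨hΛ.1.const_mul c, fun x => mul_nonneg hc.le (hΛ.2.1 x), ?_, tn_smul hΛ.2.2.2 hc.le⟩,
      scale_onesided hs c⟩
    obtain ⟨a, b, hab, ha, hb⟩ := hΛ.2.2.1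
    exact ⟨a, b, hab, mul_ne_zero hc.ne' ha, mul_ne_zero hc.ne' hb⟩
  · have hP : Pres F := fun Λ hA =>
      have := H Λ ⟨hA.1, hA.2.2.1⟩ hA.2.2.2.1 hA.2.2.2.2
      ⟨this.1.2, this.2.1⟩
    by_cases ht : ∃ t, 0 < t ∧ F t ≠ 0
    · obtain ⟨t, ht, hFt⟩ := ht
      obtain ⟨c, hc, h | h⟩ := core hP hF0 ht hFt
      · exact ⟨c, hc, Or.inl h⟩
      · exact ⟨c, hc, Or.inr (Or.inl h)⟩
    · push Not at ht
      have h0 : F 0 ≠ 0 := by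
        intro h0
        have hA := adm_T1 one_pos
        obtain ⟨-, -, a, b, hab, ha, hb⟩ := H _ ⟨hA.1, hA.2.2.1⟩ hA.2.2.2.1 hA.2.2.2.2
        apply ha
        split_ifs
        · exact ht _ (by positivity)
        · exact h0
      refine ⟨F 0, (hF0 0 le_rfl).lt_of_ne' h0, Or.inr (Or.inr fun x hx => ?_)⟩
      split_ifs with hx0
      · rw [hx0]
      · exact ht x (hx.lt_of_ne' hx0)
  · rintro ⟨c, hc, h | h | h⟩ f hf hs h2
    · have e := scale_ok hc h hf.2
      refine ⟨by rw [e]; exact scale_tn hf hc, by rw [e]; exact scale_onesided hs c, ?_⟩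
      obtain ⟨a, b, hab, ha, hb⟩ := h2
      refine ⟨a, b, hab, ?_, ?_⟩
      · rw [show F (f a) = c * f a from congrFun e a]; exact mul_ne_zero hc.ne' ha
      · rw [show F (f b) = c * f b from congrFun e b]; exact mul_ne_zero hc.ne' hb
    · exact ind_ok hc h hf hs h2
    · exact coind_ok hc h hf hs h2
  · have hP : Pres F := fun Λ hA =>
      have := H Λ ⟨hA.1, hA.2.2.1⟩ hA.2.2.2.1
      ⟨this.1.2, this.2⟩
    by_cases ht : ∃ t, 0 < t ∧ F t ≠ 0
    · obtain ⟨t, ht, hFt⟩ := ht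
      exact core hP hF0 ht hFt
    · push Not at ht
      exfalso
      obtain ⟨x, hx, hFx⟩ := hne
      have hx0 : x = 0 := by
        by_contra hcon
        exact hFx (ht x (hx.lt_of_ne' hcon))
      subst hx0
      have hA := adm_T1 one_pos
      have h0TN : IsTNFun fun _ => (0:ℝ) := by
        have := tn_smul hA.2.2.1 (le_refl (0:ℝ))
        simp only [zero_mul] at this
        exact ⟨measurable_const, this⟩
      obtain ⟨-, x₀, h | h⟩ := H _ h0TN ⟨0, Or.inl fun _ _ => rfl⟩
      · exact hFx (h (x₀ - 1) (by linarith))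
      · exact hFx (h (x₀ + 1) (by linarith))
  · rintro ⟨c, hc, h | h⟩ f hf hs
    · rw [scale_ok hc h hf.2]
      exact ⟨scale_tn hf hc, scale_onesided hs c⟩
    · exact ind_ok' hc h hf hs
end

section
/- Let X and Y be infinite totally ordered sets such that there exists a totally positive kernel on X × Y. A function F : (0,∞) → (0,∞) satisfies that F∘K is totally positive for every totally positive kernel K : X × Y → ℝ if and only if F(x) = c·x for some c > 0. -/
/-- A kernel on linearly ordered sets is totally positive if all matrices
obtained by evaluating it on increasing tuples have positive determinant. -/
def IsTPKernel {X Y : Type*} [LinearOrder X] [LinearOrder Y] (K : X → Y → ℝ) : Prop :=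
  ∀ (n : ℕ) (x : Fin n → X) (y : Fin n → Y), StrictMono x → StrictMono y →
    0 < (Matrix.of fun i j : Fin n => K (x i) (y j)).det


/-- Generalized polynomials with few terms have few positive zeros. -/
lemma gp_zero : ∀ (n : ℕ) (c : Fin n → ℝ) (l : Fin n → ℕ) (x : Fin n → ℝ), StrictMono l →
    StrictMono x → (∀ i, 0 < x i) → (∀ i, ∑ k, c k * x i ^ l k = 0) → ∀ k, c k = 0 := by
  intro n
  induction n with
  | zero => intro c l x _ _ _ _ k; exact k.elim0
  | succ n ih =>
    intro c l x hl hx hpos hz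
    have hlt : ∀ k : Fin n, l 0 < l k.succ := fun k => hl (Fin.succ_pos k)
    set g : ℝ → ℝ := fun t => c 0 + ∑ k : Fin n, c k.succ * t ^ (l k.succ - l 0) with hg
    have hgz : ∀ i, g (x i) = 0 := by
      intro i
      have h1 : x i ^ l 0 * g (x i) = 0 := by
        rw [← hz i, Fin.sum_univ_succ, hg]
        simp only [mul_add, Finset.mul_sum]
        congr 1
        · ring
        · refine Finset.sum_congr rfl fun k _ => ?_
          rw [mul_left_comm, ← pow_add]
          congr 2
          have := hlt k
          omega
      exact (mul_eq_zero.1 h1).resolve_left (pow_pos (hpos i) _).ne'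
    have hgd : ∀ t, HasDerivAt g (∑ k : Fin n, (c k.succ * ((l k.succ - l 0 : ℕ) : ℝ)) *
        t ^ (l k.succ - l 0 - 1)) t := by
      intro t
      have : HasDerivAt g (0 + ∑ k : Fin n, c k.succ * ((((l k.succ - l 0 : ℕ) : ℝ)) *
        t ^ (l k.succ - l 0 - 1))) t := by
        refine (hasDerivAt_const t (c 0)).add ?_
        refine HasDerivAt.fun_sum fun k _ => ?_
        exact (hasDerivAt_pow _ t).const_mul _
      simpa [mul_assoc] using this
    have hr : ∀ i : Fin n, ∃ y, x i.castSucc < y ∧ y < x i.succ ∧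
        ∑ k : Fin n, (c k.succ * ((l k.succ - l 0 : ℕ) : ℝ)) * y ^ (l k.succ - l 0 - 1) = 0 := by
      intro i
      obtain ⟨y, hy, hy0⟩ := exists_hasDerivAt_eq_zero (f := g) (hx (Fin.castSucc_lt_succ (i := i)))
        (fun t _ => (hgd t).continuousAt.continuousWithinAt) (by rw [hgz, hgz])
        (fun t _ => hgd t)
      exact ⟨y, hy.1, hy.2, hy0⟩
    choose y hy1 hy2 hy3 using hr
    have hc := ih (fun k => c k.succ * ((l k.succ - l 0 : ℕ) : ℝ))
      (fun k => l k.succ - l 0 - 1) y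
      (by
        intro a b hab
        have h1 := hlt a
        have h2 := hl (Fin.succ_lt_succ_iff.2 hab)
        show l a.succ - l 0 - 1 < l b.succ - l 0 - 1
        omega)
      (by
        intro a b hab
        refine (hy2 a).trans_le (le_trans (hx.monotone ?_) (hy1 b).le)
        exact hab)
      (fun i => (hpos _).trans (hy1 i)) hy3
    have hc' : ∀ k : Fin n, c k.succ = 0 := by
      intro k
      have h1 := hlt k
      refine (mul_eq_zero.1 (hc k)).resolve_right ?_
      exact_mod_cast (by omega : l k.succ - l 0 ≠ 0)
    intro k
    refine Fin.cases ?_ hc' k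
    have := hgz 0
    simpa [hg, hc'] using this

lemma gv_ne (n : ℕ) (l : Fin n → ℕ) (x : Fin n → ℝ) (hl : StrictMono l)
    (hx : StrictMono x) (hpos : ∀ i, 0 < x i) :
    (Matrix.of fun i k => x i ^ l k).det ≠ 0 := by
  intro h
  obtain ⟨v, hv, hv0⟩ := Matrix.exists_mulVec_eq_zero_iff.2 h
  apply hv
  funext k
  refine gp_zero n v l x hl hx hpos (fun i => ?_) k
  have := congrFun hv0 i
  simpa [Matrix.mulVec, dotProduct, mul_comm] using this

lemma gv_pos : ∀ (n : ℕ) (l : Fin n → ℕ) (x : Fin n → ℝ), StrictMono l →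
    StrictMono x → (∀ i, 0 < x i) → 0 < (Matrix.of fun i k => x i ^ l k).det := by
  intro n
  induction n with
  | zero => intro l x _ _ _; simp
  | succ n ih =>
    intro l x hl hx hpos
    set X : ℝ → Fin (n+1) → ℝ := fun t => Fin.snoc (fun i : Fin n => x i.castSucc) t with hX
    set f : ℝ → ℝ := fun t => (Matrix.of fun i k => X t i ^ l k).det with hf
    have hxX : X (x (Fin.last n)) = x := by
      funext i
      refine Fin.lastCases ?_ (fun i => ?_) i <;> simp [hX]
    have hXm : ∀ t, x (Fin.last n) ≤ t → StrictMono (X t) := by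
      intro t ht i j hij
      induction j using Fin.lastCases with
      | last =>
        induction i using Fin.lastCases with
        | last => exact absurd hij (lt_irrefl _)
        | cast i => simpa [hX] using (hx hij).trans_le ht
      | cast j =>
        induction i using Fin.lastCases with
        | last => exact absurd hij (not_lt.2 (Fin.le_last _))
        | cast i => simpa [hX] using hx hij
    have hXp : ∀ t, x (Fin.last n) ≤ t → ∀ i, 0 < X t i := by
      intro t ht i
      induction i using Fin.lastCases with
      | last => simpa [hX] using (hpos _).trans_le ht
      | cast i => simpa [hX] using hpos _
    have hfe : ∀ t, f t = ∑ k : Fin (n+1), (-1 : ℝ) ^ ((Fin.last n : ℕ) + (k:ℕ)) * t ^ l k *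
        (Matrix.of fun (i : Fin n) (j : Fin n) => x i.castSucc ^ l (k.succAbove j)).det := by
      intro t
      simp only [hf]
      rw [Matrix.det_succ_row _ (Fin.last n)]
      refine Finset.sum_congr rfl fun k _ => ?_
      congr 1
      · simp [hX]
      · congr 1
        ext i j
        simp [hX]
    have hcont : Continuous f := by
      rw [funext hfe]
      fun_prop
    have hlim : Filter.Tendsto (fun t => f t / t ^ l (Fin.last n)) Filter.atTop (nhds
        (∑ k : Fin (n+1), if k = Fin.last n then
          (Matrix.of fun (i : Fin n) (j : Fin n) => x i.castSucc ^ l (j.castSucc)).det else 0)) := by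
      simp only [hfe, Finset.sum_div]
      refine tendsto_finsetSum _ fun k _ => ?_
      split_ifs with hk
      · subst hk
        refine Filter.Tendsto.congr' ?_ tendsto_const_nhds
        filter_upwards [Filter.eventually_gt_atTop 0] with t ht
        have h1 : ((-1 : ℝ) ^ ((Fin.last n : ℕ) + ((Fin.last n : Fin (n+1)) : ℕ))) = 1 := by
          rw [← two_mul, pow_mul]; simp
        rw [h1]
        have := (pow_pos ht (l (Fin.last n))).ne'
        simp only [Fin.succAbove_last]
        field_simp
      · have hk' : l k < l (Fin.last n) := hl (Fin.lt_last_iff_ne_last.2 hk)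
        have := (tendsto_pow_div_pow_atTop_zero (𝕜 := ℝ) hk').const_mul
          ((-1 : ℝ) ^ ((Fin.last n : ℕ) + (k:ℕ)) *
        (Matrix.of fun (i : Fin n) (j : Fin n) => x i.castSucc ^ l (k.succAbove j)).det)
        rw [mul_zero] at this
        refine this.congr fun t => ?_
        ring
    rw [Finset.sum_ite_eq' Finset.univ (Fin.last n), if_pos (Finset.mem_univ _)] at hlim
    have hp : 0 < (Matrix.of fun (i : Fin n) (j : Fin n) => x i.castSucc ^ l (j.castSucc)).det :=
      ih (fun j => l j.castSucc) (fun i => x i.castSucc) (fun a b h => hl h) (fun a b h => hx h)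
        (fun i => hpos _)
    obtain ⟨T, hT1, hT2, hT3⟩ := ((hlim.eventually (lt_mem_nhds hp)).and
      ((Filter.eventually_ge_atTop (x (Fin.last n))).and (Filter.eventually_gt_atTop 0))).exists
    have hfT : 0 < f T := by
      have := mul_pos hT1 (pow_pos hT3 (l (Fin.last n)))
      rwa [div_mul_cancel₀ _ (pow_pos hT3 (l (Fin.last n))).ne'] at this
    have hgoal : f (x (Fin.last n)) = (Matrix.of fun i k => x i ^ l k).det := by
      simp only [hf, hxX]
    rw [← hgoal]
    by_contra hneg
    push Not at hneg
    obtain ⟨s, hs, hs0⟩ := intermediate_value_Icc hT2 hcont.continuousOn ⟨hneg, hfT.le⟩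
    exact gv_ne (n+1) l (X s) hl (hXm s hs.1) (hXp s hs.1) hs0

/-- Andreief / Cauchy-Binet. -/
lemma andreief (n N : ℕ) (A : Matrix (Fin n) (Fin N) ℝ) (B : Matrix (Fin N) (Fin n) ℝ) :
    (n.factorial : ℝ) * (A * B).det =
      ∑ f : Fin n → Fin N, (A.submatrix id f).det * (B.submatrix f id).det := by
  have h1 : (A * B).det = ∑ f : Fin n → Fin N, (∏ i, A i (f i)) * (B.submatrix f id).det := by
    have : (A * B) = fun i => ∑ k, A i k • B k := by
      ext i j
      simp [Matrix.mul_apply, Finset.sum_apply]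
    rw [this]
    have h := (Matrix.detRowAlternating (n := Fin n) (R := ℝ)).toMultilinearMap.map_sum
      (fun i (k : Fin N) => A i k • B k)
    refine h.trans (Finset.sum_congr rfl fun f _ => ?_)
    exact (Matrix.detRowAlternating (n := Fin n) (R := ℝ)).toMultilinearMap.map_smul_univ
      (fun i => A i (f i)) (fun i => B (f i))
  have h2 : ∀ σ : Equiv.Perm (Fin n), (A * B).det = ∑ f : Fin n → Fin N,
      ((Equiv.Perm.sign σ : ℤ) : ℝ) * (∏ i, A i (f (σ i))) * (B.submatrix f id).det := by
    intro σ
    rw [h1, ← (Equiv.arrowCongr σ.symm (Equiv.refl (Fin N))).sum_comp]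
    refine Finset.sum_congr rfl fun f _ => ?_
    have := Matrix.det_permute σ (B.submatrix f id)
    simp only [Matrix.submatrix_submatrix] at this
    have e : (Equiv.arrowCongr σ.symm (Equiv.refl (Fin N))) f = f ∘ σ := by
      ext i; simp
    rw [e]
    have e2 : B.submatrix (f ∘ σ) id = B.submatrix (f ∘ σ) (id ∘ id) := rfl
    rw [e2, this]
    simp only [Function.comp]
    ring
  have h3 : (n.factorial : ℝ) * (A * B).det = ∑ σ : Equiv.Perm (Fin n), (A * B).det := by
    simp [Finset.card_univ, Fintype.card_perm]
  rw [h3, Finset.sum_congr rfl fun σ _ => h2 σ, Finset.sum_comm]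
  refine Finset.sum_congr rfl fun f _ => ?_
  rw [← Finset.sum_mul]
  congr 1
  rw [← Matrix.det_transpose (A.submatrix id f), Matrix.det_apply']
  rfl

lemma gv_prod_nonneg {n : ℕ} (a b : Fin n → ℝ) (ha : StrictMono a) (hb : StrictMono b)
    (ha0 : ∀ i, 0 < a i) (hb0 : ∀ i, 0 < b i) (l m : ℕ → ℕ) (hl : StrictMono l)
    (hm : StrictMono m) (f : Fin n → ℕ) :
    0 ≤ (Matrix.of fun i k => a i ^ l (f k)).det * (Matrix.of fun k j => b j ^ m (f k)).det := by
  by_cases hf : Function.Injective f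
  · set σ := Tuple.sort f
    have hs : StrictMono (f ∘ σ) :=
      (Tuple.monotone_sort f).strictMono_of_injective (hf.comp σ.injective)
    have h1 := gv_pos n (fun k => l (f (σ k))) a (hl.comp hs) ha ha0
    have h2 := gv_pos n (fun k => m (f (σ k))) b (hm.comp hs) hb hb0
    have e1 := Matrix.det_permute' σ (Matrix.of fun i k => a i ^ l (f k))
    have e2 := Matrix.det_permute σ (Matrix.of fun k j => b j ^ m (f k))
    rw [← Matrix.det_transpose] at h2
    change 0 < ((Matrix.of fun i k => a i ^ l (f k)).submatrix id σ).det at h1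
    change 0 < ((Matrix.of fun k j => b j ^ m (f k)).submatrix σ id).det at h2
    have h3 := mul_pos h1 h2
    rw [e1, e2] at h3
    rcases Int.units_eq_one_or (Equiv.Perm.sign σ) with h | h <;> rw [h] at h3 <;>
      simp at h3 <;> exact h3.le
  · have : (Matrix.of fun i k => a i ^ l (f k)).det = 0 := by
      simp only [Function.Injective, not_forall] at hf
      obtain ⟨i, j, hij, hne⟩ := hf
      exact Matrix.det_zero_of_column_eq hne (by intro k; simp [hij])
    rw [this, zero_mul]

lemma series_TP {X Y : Type*} [LinearOrder X] [LinearOrder Y] (φ : X → ℝ) (ψ : Y → ℝ)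
    (hφ : StrictMono φ) (hψ : StrictMono ψ) (hφ0 : ∀ x, 0 < φ x) (hψ0 : ∀ y, 0 < ψ y)
    (c : ℕ → ℝ) (hc : ∀ k, 0 < c k) (l m : ℕ → ℕ) (hl : StrictMono l) (hm : StrictMono m)
    (K : X → Y → ℝ) (hK : ∀ x y, HasSum (fun k => c k * φ x ^ l k * ψ y ^ m k) (K x y)) :
    IsTPKernel K := by
  intro n x y hx hy
  set a : Fin n → ℝ := fun i => φ (x i)
  set b : Fin n → ℝ := fun i => ψ (y i)
  have ha : StrictMono a := hφ.comp hx
  have hb : StrictMono b := hψ.comp hy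
  have ha0 : ∀ i, 0 < a i := fun i => hφ0 _
  have hb0 : ∀ i, 0 < b i := fun i => hψ0 _
  have hlim : Filter.Tendsto (fun N => (n.factorial : ℝ) * (Matrix.of fun i j : Fin n =>
      ∑ k ∈ Finset.range N, c k * φ (x i) ^ l k * ψ (y j) ^ m k).det) Filter.atTop
      (nhds ((n.factorial : ℝ) * (Matrix.of fun i j : Fin n => K (x i) (y j)).det)) := by
    refine Filter.Tendsto.const_mul _ ?_
    have hcd : Continuous (fun M : Matrix (Fin n) (Fin n) ℝ => M.det) :=
      Continuous.matrix_det continuous_id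
    refine (hcd.tendsto _).comp ?_
    refine tendsto_pi_nhds.2 fun i => tendsto_pi_nhds.2 fun j => ?_
    exact (hK (x i) (y j)).tendsto_sum_nat
  set δ : ℝ := (∏ i : Fin n, c i) * ((Matrix.of fun (i k : Fin n) => a i ^ l k).det *
    (Matrix.of fun (k j : Fin n) => b j ^ m k).det)
  have hδ : 0 < δ := by
    refine mul_pos (Finset.prod_pos fun i _ => hc _) (mul_pos ?_ ?_)
    · exact gv_pos n (fun k => l k) a (fun i j h => hl h) ha ha0
    · rw [← Matrix.det_transpose]
      exact gv_pos n (fun k => m k) b (fun i j h => hm h) hb hb0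
  have key : ∀ N, n ≤ N → δ ≤ (n.factorial : ℝ) * (Matrix.of fun i j : Fin n =>
      ∑ k ∈ Finset.range N, c k * φ (x i) ^ l k * ψ (y j) ^ m k).det := by
    intro N hN
    have e : (Matrix.of fun i j : Fin n =>
      ∑ k ∈ Finset.range N, c k * φ (x i) ^ l k * ψ (y j) ^ m k) =
      (Matrix.of fun (i : Fin n) (k : Fin N) => a i ^ l k) *
      (Matrix.of fun (k : Fin N) (j : Fin n) => c k * b j ^ m k) := by
      ext i j
      simp only [Matrix.mul_apply, Matrix.of_apply]
      rw [Finset.sum_range]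
      refine Finset.sum_congr rfl fun k _ => ?_
      simp only [a, b]
      ring
    rw [e, andreief]
    have ht : ∀ f : Fin n → Fin N,
      ((Matrix.of fun (i : Fin n) (k : Fin N) => a i ^ l k).submatrix id f).det *
      ((Matrix.of fun (k : Fin N) (j : Fin n) => c k * b j ^ m k).submatrix f id).det =
      (∏ i : Fin n, c (f i)) * ((Matrix.of fun (i k : Fin n) => a i ^ l (f k)).det *
      (Matrix.of fun (k j : Fin n) => b j ^ m (f k)).det) := by
      intro f
      have := Matrix.det_mul_column (fun k => c (f k)) (Matrix.of fun (k j : Fin n) => b j ^ m (f k))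
      have e2 : ((Matrix.of fun (k : Fin N) (j : Fin n) => c k * b j ^ m k).submatrix f id).det =
        (∏ i : Fin n, c (f i)) * (Matrix.of fun (k j : Fin n) => b j ^ m (f k)).det := this
      rw [e2]
      have e3 : ((Matrix.of fun (i : Fin n) (k : Fin N) => a i ^ l k).submatrix id f) =
        (Matrix.of fun (i k : Fin n) => a i ^ l (f k)) := rfl
      rw [e3]
      ring
    rw [Finset.sum_congr rfl fun f _ => ht f]
    refine le_trans (le_of_eq ?_) (Finset.single_le_sum (f := fun f : Fin n → Fin N =>
      (∏ i : Fin n, c (f i)) * ((Matrix.of fun (i k : Fin n) => a i ^ l (f k)).det *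
      (Matrix.of fun (k j : Fin n) => b j ^ m (f k)).det)) (fun f _ => ?_)
      (Finset.mem_univ (Fin.castLE hN)))
    · rfl
    · exact mul_nonneg (Finset.prod_nonneg fun i _ => (hc _).le)
        (gv_prod_nonneg a b ha hb ha0 hb0 l m hl hm (fun i => (f i : ℕ)))
  have h := ge_of_tendsto hlim (Filter.eventually_atTop.2 ⟨n, key⟩)
  have h' := hδ.trans_le h
  exact (mul_pos_iff_of_pos_left (by positivity)).1 h'

lemma scale_TP {X Y : Type*} [LinearOrder X] [LinearOrder Y] (K : X → Y → ℝ) (hK : IsTPKernel K)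
    (u : X → ℝ) (v : Y → ℝ) (hu : ∀ x, 0 < u x) (hv : ∀ y, 0 < v y) :
    IsTPKernel fun x y => u x * (v y * K x y) := by
  intro n x y hx hy
  have h1 := Matrix.det_mul_column (fun i => u (x i))
    (Matrix.of fun i j : Fin n => v (y j) * K (x i) (y j))
  have h2 := Matrix.det_mul_row (fun j => v (y j)) (Matrix.of fun i j : Fin n => K (x i) (y j))
  simp only [Matrix.of_apply] at h1 h2
  rw [h1, h2]
  exact mul_pos (Finset.prod_pos fun i _ => hu _) (mul_pos (Finset.prod_pos fun i _ => hv _)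
    (hK n x y hx hy))

lemma TP_pos {X Y : Type*} [LinearOrder X] [LinearOrder Y] (K : X → Y → ℝ) (hK : IsTPKernel K)
    (x : X) (y : Y) : 0 < K x y := by
  have := hK 1 (fun _ => x) (fun _ => y) (Subsingleton.strictMono _) (Subsingleton.strictMono _)
  simpa using this

lemma TP_two {X Y : Type*} [LinearOrder X] [LinearOrder Y] (K : X → Y → ℝ) (hK : IsTPKernel K)
    (x x' : X) (y y' : Y) (hx : x < x') (hy : y < y') :
    K x y' * K x' y < K x y * K x' y' := by
  have := hK 2 ![x, x'] ![y, y'] (by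
    intro i j h; fin_cases i <;> fin_cases j <;> simp_all) (by
    intro i j h; fin_cases i <;> fin_cases j <;> simp_all)
  simpa [Matrix.det_fin_two] using this

lemma hs_congr {f g : ℕ → ℝ} {a : ℝ} (h : ∀ k, f k = g k) : HasSum f a ↔ HasSum g a := by
  rw [funext h]

lemma exp_hasSum (x : ℝ) : HasSum (fun k : ℕ => x ^ k / k.factorial) (Real.exp x) := by
  rw [Real.exp_eq_exp_ℝ]
  exact NormedSpace.expSeries_div_hasSum_exp x

lemma exp_TP {X Y : Type*} [LinearOrder X] [LinearOrder Y] (φ : X → ℝ) (ψ : Y → ℝ)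
    (hφ : StrictMono φ) (hψ : StrictMono ψ) (hφ0 : ∀ x, 0 < φ x) (hψ0 : ∀ y, 0 < ψ y)
    (t : ℝ) (ht : 0 < t) : IsTPKernel fun x y => Real.exp (t * φ x * ψ y) := by
  refine series_TP φ ψ hφ hψ hφ0 hψ0 (fun k => t ^ k / k.factorial) (fun k => by positivity)
    id id strictMono_id strictMono_id _ fun x y => ?_
  have := exp_hasSum (t * φ x * ψ y)
  refine (hs_congr fun k => ?_).1 this
  simp only [id, mul_pow]
  ring

lemma special_TP {X Y : Type*} [LinearOrder X] [LinearOrder Y] (φ : X → ℝ) (ψ : Y → ℝ)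
    (hφ : StrictMono φ) (hψ : StrictMono ψ) (hφ0 : ∀ x, 0 < φ x) (hψ0 : ∀ y, 0 < ψ y) :
    IsTPKernel fun x y => 1 + (φ x ^ 2 * ψ y ^ 2 + φ x ^ 3 * ψ y ^ 5 * Real.exp (φ x * ψ y)) := by
  refine series_TP φ ψ hφ hψ hφ0 hψ0 (fun k => 1 / (k - 2).factorial) (fun k => by positivity)
    (fun k => if k = 0 then 0 else k + 1) (fun k => if k = 0 then 0 else if k = 1 then 2 else k + 3)
    ?_ ?_ _ fun x y => ?_
  · intro a b h
    dsimp only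
    split_ifs <;> omega
  · intro a b h
    dsimp only
    split_ifs <;> omega
  have := (exp_hasSum (φ x * ψ y)).mul_left (φ x ^ 3 * ψ y ^ 5)
  rw [← hasSum_nat_add_iff' 2]
  have e : (1 + (φ x ^ 2 * ψ y ^ 2 + φ x ^ 3 * ψ y ^ 5 * Real.exp (φ x * ψ y)) -
      ∑ i ∈ Finset.range 2,
        (1 / ((i - 2).factorial : ℝ) * φ x ^ (if i = 0 then 0 else i + 1)) *
          ψ y ^ (if i = 0 then 0 else if i = 1 then 2 else i + 3)) =
    φ x ^ 3 * ψ y ^ 5 * Real.exp (φ x * ψ y) := by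
    simp [Finset.sum_range_succ]
  rw [e]
  refine (hs_congr fun k => ?_).1 this
  simp only [mul_pow]
  simp
  ring

/-- All 2x2 positive matrices occur. -/
lemma two_by_two {X Y : Type*} [LinearOrder X] [LinearOrder Y] (φ : X → ℝ) (ψ : Y → ℝ)
    (hφ : StrictMono φ) (hψ : StrictMono ψ) (hφ0 : ∀ x, 0 < φ x) (hψ0 : ∀ y, 0 < ψ y)
    (x x' : X) (y y' : Y) (hx : x < x') (hy : y < y')
    (F : ℝ → ℝ) (H : ∀ K : X → Y → ℝ, IsTPKernel K → IsTPKernel fun a b => F (K a b))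
    (a b c d : ℝ) (ha : 0 < a) (hb : 0 < b) (hc : 0 < c) (hd : 0 < d) (h : b * c < a * d) :
    F b * F c < F a * F d := by
  classical
  have hdx : 0 < φ x' - φ x := sub_pos.2 (hφ hx)
  have hdy : 0 < ψ y' - ψ y := sub_pos.2 (hψ hy)
  set t : ℝ := Real.log (a * d / (b * c)) / ((φ x' - φ x) * (ψ y' - ψ y)) with ht
  have ht0 : 0 < t := by
    refine div_pos (Real.log_pos ?_) (mul_pos hdx hdy)
    rw [one_lt_div (by positivity)]; exact h
  set E : X → Y → ℝ := fun x y => Real.exp (t * φ x * ψ y) with hE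
  have hEp : ∀ x y, 0 < E x y := fun x y => Real.exp_pos _
  have hcr : E x y * E x' y' * (b * c) = E x y' * E x' y * (a * d) := by
    have : a * d / (b * c) = Real.exp (t * ((φ x' - φ x) * (ψ y' - ψ y))) := by
      rw [ht, div_mul_cancel₀ _ (mul_pos hdx hdy).ne', Real.exp_log (by positivity)]
    rw [div_eq_iff (by positivity)] at this
    have h5 : E x y * E x' y' =
        E x y' * E x' y * Real.exp (t * ((φ x' - φ x) * (ψ y' - ψ y))) := by
      simp only [hE, ← Real.exp_add]
      congr 1
      ring
    rw [this, h5]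
    ring
  have hxx : x' ≠ x := hx.ne'
  have hyy : y' ≠ y := hy.ne'
  have h1 := scale_TP E (exp_TP φ ψ hφ hψ hφ0 hψ0 t ht0)
    (fun z => if z = x then 1 else c * E x y / (a * E x' y))
    (fun z => if z = y then a / E x y else b / E x y')
    (fun z => by
      have := hEp x y
      have := hEp x' y
      split_ifs <;> positivity)
    (fun z => by
      have := hEp x y
      have := hEp x y'
      split_ifs <;> positivity)
  have h2 := TP_two _ (H _ h1) x x' y y' hx hy
  have n1 := (hEp x y).ne'
  have n2 := (hEp x y').ne'
  have n3 := (hEp x' y).ne'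
  have n4 := (hEp x' y').ne'
  have e1 : c * E x y / (a * E x' y) * (a / E x y * E x' y) = c := by field_simp
  have e2 : b / E x y' * E x y' = b := by field_simp
  have e3 : a / E x y * E x y = a := by field_simp
  have e4 : c * E x y / (a * E x' y) * (b / E x y' * E x' y') = d := by
    field_simp
    linear_combination hcr
  simp only [hxx, hyy, if_true, if_false, one_mul, e1, e2, e3, e4] at h2
  exact h2
open Filter Topology Asymptotics

lemma power_law (F : ℝ → ℝ) (hF : ∀ x : ℝ, 0 < x → 0 < F x)
    (h2 : ∀ a b c d : ℝ, 0 < a → 0 < b → 0 < c → 0 < d → b * c < a * d → F b * F c < F a * F d) :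
    ∃ c α : ℝ, 0 < c ∧ 0 < α ∧ ∀ x, 0 < x → F x = c * x ^ α := by
  set g : ℝ → ℝ := fun s => Real.log (F (Real.exp s)) with hg
  have hFe : ∀ s, 0 < F (Real.exp s) := fun s => hF _ (Real.exp_pos s)
  have hlt : ∀ s t u v, u + v < s + t → g u + g v < g s + g t := by
    intro s t u v h
    simp only [hg]
    rw [← Real.log_mul (hFe _).ne' (hFe _).ne', ← Real.log_mul (hFe _).ne' (hFe _).ne']
    refine Real.log_lt_log (mul_pos (hFe _) (hFe _)) ?_
    refine h2 _ _ _ _ (Real.exp_pos _) (Real.exp_pos _) (Real.exp_pos _) (Real.exp_pos _) ?_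
    rw [← Real.exp_add, ← Real.exp_add]
    exact Real.exp_lt_exp.2 h
  have hmono : StrictMono g := by
    intro s t h
    have := hlt t 0 s 0 (by linarith)
    linarith
  obtain ⟨p, hp⟩ : ∃ p, ContinuousAt g p := by
    by_contra hcon
    push Not at hcon
    have h := hmono.monotone.countable_not_continuousAt
    have : {x | ¬ ContinuousAt g x} = Set.univ := by
      ext x; simpa using hcon x
    rw [this] at h
    exact Set.not_countable_univ h
  have hsum : ∀ s t, g s + g t = g (s + t - p) + g p := by
    intro s t
    have hc : ContinuousAt (fun e : ℝ => g (p + e)) 0 := by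
      refine ContinuousAt.comp (g := g) (by simpa using hp) (by fun_prop)
    have hc1 : Tendsto (fun e : ℝ => g (p + e)) (𝓝 0) (𝓝 (g p)) := by
      simpa [ContinuousAt] using hc
    apply le_antisymm
    · refine ge_of_tendsto ((hc1.mono_left (nhdsWithin_le_nhds (s := Set.Ioi 0))).const_add _) ?_
      filter_upwards [self_mem_nhdsWithin] with e he
      have he : 0 < e := he
      exact (hlt _ _ _ _ (by linarith)).le
    · refine le_of_tendsto ((hc1.mono_left (nhdsWithin_le_nhds (s := Set.Iio 0))).const_add _) ?_
      filter_upwards [self_mem_nhdsWithin] with e he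
      have he : e < 0 := he
      exact (hlt _ _ _ _ (by linarith)).le
  let h : ℝ →+ ℝ := 
    { toFun := fun s => g s - g 0
      map_zero' := by simp
      map_add' := by
        intro s t
        have h1 := hsum s t
        have h2 := hsum (s + t) 0
        rw [add_zero] at h2
        linarith }
  have hh : ∀ s, h s = g s - g 0 := fun s => rfl
  have hcont0 : ContinuousAt h 0 := by
    have h1 : (fun s => h s) = fun s => g (p + s) - g p := by
      funext s
      rw [hh]
      have h1 := hsum s p
      have h2 := hsum (p + s) 0
      rw [add_sub_cancel_right] at h1
      rw [add_zero, add_sub_cancel_left] at h2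
      linarith
    show ContinuousAt (fun s => h s) 0
    rw [h1]
    refine ContinuousAt.sub (ContinuousAt.comp (g := g) (by simpa using hp) (by fun_prop)) continuousAt_const
  have hcont : Continuous h := continuous_of_continuousAt_zero h hcont0
  have hlin : ∀ s, h s = s * h 1 := by
    intro s
    have := map_real_smul h hcont s 1
    simpa using this
  refine ⟨F 1, h 1, hF 1 one_pos, ?_, ?_⟩
  · rw [hh]; linarith [hmono (zero_lt_one)]
  · intro x hx
    have h1 := hlin (Real.log x)
    rw [hh] at h1
    have h3 : Real.log (F x) = Real.log (F 1) + Real.log x * h 1 := by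
      have : g (Real.log x) = Real.log (F x) := by simp [hg, Real.exp_log hx]
      have h0 : g 0 = Real.log (F 1) := by simp [hg]
      linarith
    rw [← Real.exp_log (hF x hx), h3, Real.exp_add, Real.exp_log (hF 1 one_pos),
      Real.rpow_def_of_pos hx]

lemma lead_det (n : ℕ) (P Q : Matrix (Fin n) (Fin n) ℝ) (hP : P.det ≠ 0) (hQ : Q.det ≠ 0)
    (d : Fin n → ℝ) (hd : ∀ k, d k ≠ 0) (w : Fin n → ℕ) (W : ℕ) (hw : ∀ k, w k ≤ W)
    (H : ℝ → Matrix (Fin n) (Fin n) ℝ) (hH : ∀ e, 0 < e → 0 < (H e).det)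
    (hR : ∀ i j, (fun e => H e i j - ∑ k, d k * e ^ w k * (P i k * Q k j)) =o[𝓝[>] 0]
      fun e => e ^ W) : 0 < (∏ k, d k) * P.det * Q.det := by
  set D : ℝ → Matrix (Fin n) (Fin n) ℝ := fun e => Matrix.diagonal fun k => d k * e ^ w k with hD
  set D' : ℝ → Matrix (Fin n) (Fin n) ℝ := fun e => Matrix.diagonal fun k => (d k * e ^ w k)⁻¹
    with hD'
  set R : ℝ → Matrix (Fin n) (Fin n) ℝ := fun e => H e - P * D e * Q with hRdef
  have hRe : ∀ i j, (fun e => R e i j) =o[𝓝[>] 0] fun e => e ^ W := by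
    intro i j
    refine (hR i j).congr_left fun e => ?_
    simp only [hRdef, hD]
    rw [Matrix.sub_apply, Matrix.mul_apply]
    simp only [Matrix.mul_diagonal]
    congr 1
    refine Finset.sum_congr rfl fun k _ => ?_
    ring
  have hPu : IsUnit P.det := isUnit_iff_ne_zero.2 hP
  have hQu : IsUnit Q.det := isUnit_iff_ne_zero.2 hQ
  have hM : ∀ e, 0 < e → D' e * (P⁻¹ * H e * Q⁻¹) = 1 + D' e * (P⁻¹ * R e * Q⁻¹) := by
    intro e he
    have h1 : H e = P * D e * Q + R e := by simp [hRdef]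
    have h2 : D' e * D e = 1 := by
      simp only [hD, hD', Matrix.diagonal_mul_diagonal]
      rw [← Matrix.diagonal_one]
      congr 1
      funext k
      exact inv_mul_cancel₀ (mul_ne_zero (hd k) (pow_pos he _).ne')
    rw [h1, Matrix.mul_add, Matrix.add_mul, Matrix.mul_add]
    congr 1
    rw [Matrix.mul_assoc P, Matrix.nonsing_inv_mul_cancel_left _ _ hPu,
      Matrix.mul_nonsing_inv_cancel_right _ _ hQu, h2]
  have hz : Tendsto (fun e => 1 + D' e * (P⁻¹ * R e * Q⁻¹)) (𝓝[>] 0)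
      (𝓝 (1 + (0 : Matrix (Fin n) (Fin n) ℝ))) := by
    refine Tendsto.const_add _ ?_
    refine tendsto_pi_nhds.2 fun i => tendsto_pi_nhds.2 fun j => ?_
    have h1 : (fun e => (P⁻¹ * R e * Q⁻¹) i j) =o[𝓝[>] 0] fun e : ℝ => e ^ W := by
      simp only [Matrix.mul_apply, Finset.sum_mul]
      refine IsLittleO.fun_sum fun q _ => IsLittleO.fun_sum fun p _ => ?_
      have := ((hRe p q).const_mul_left (P⁻¹ i p * Q⁻¹ q j))
      refine this.congr_left fun e => ?_
      ring
    have h2 : (fun e : ℝ => e ^ W) =O[𝓝[>] 0] fun e : ℝ => d i * e ^ w i := by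
      refine IsBigO.trans ?_ (isBigO_self_const_mul (hd i) _ _)
      refine IsBigO.of_bound 1 ?_
      filter_upwards [Ioo_mem_nhdsGT (zero_lt_one (α := ℝ))] with e he
      rw [one_mul, norm_pow, norm_pow, Real.norm_of_nonneg he.1.le]
      exact pow_le_pow_of_le_one he.1.le he.2.le (hw i)
    have h3 := (h1.trans_isBigO h2).tendsto_div_nhds_zero
    refine h3.congr fun e => ?_
    simp only [hD', Matrix.diagonal_mul]
    rw [div_eq_inv_mul]
  have hcd : Continuous (fun M : Matrix (Fin n) (Fin n) ℝ => M.det) :=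
      Continuous.matrix_det continuous_id
  have hdet := (hcd.tendsto _).comp hz
  simp only [add_zero, Matrix.det_one] at hdet
  obtain ⟨e, he1, he2⟩ := ((hdet.eventually (lt_mem_nhds one_pos)).and self_mem_nhdsWithin).exists
  have he2 : 0 < e := he2
  simp only [Function.comp] at he1
  rw [← hM e he2] at he1
  simp only [Matrix.det_mul, hD', Matrix.det_diagonal, Matrix.det_nonsing_inv, Ring.inverse_eq_inv',
    Finset.prod_inv_distrib, Finset.prod_mul_distrib, mul_inv] at he1
  have h5 : 0 < (∏ k, e ^ w k) := Finset.prod_pos fun k _ => pow_pos he2 _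
  have h6 := hH e he2
  have h7 : 0 < ((∏ k, d k) * P.det * Q.det)⁻¹ := by
    have e7 : (∏ x, d x)⁻¹ * (∏ x, e ^ w x)⁻¹ * (P.det⁻¹ * (H e).det * Q.det⁻¹) =
      ((∏ k, d k) * P.det * Q.det)⁻¹ * ((∏ x, e ^ w x)⁻¹ * (H e).det) := by
      simp only [mul_inv]; ring
    rw [e7] at he1
    exact (mul_pos_iff_of_pos_right (by positivity)).1 he1
  exact inv_pos.1 h7

lemma rpow_taylor (α : ℝ) : (fun s : ℝ => (1 + s) ^ α - (1 + α * s + α * (α - 1) / 2 * s ^ 2))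
    =O[𝓝 0] fun s => s ^ 3 := by
  have h := (Real.one_add_rpow_hasFPowerSeriesAt_zero (a := α)).isBigO_sub_partialSum_pow 3
  have hc : Ring.choose α 2 = α * (α - 1) / 2 := by
    have := Ring.descPochhammer_eq_factorial_smul_choose α 2
    simp [descPochhammer_succ_right, Polynomial.smeval_sub, Polynomial.smeval_mul] at this
    linarith
  refine IsBigO.trans (h.congr_left fun s => ?_) ?_
  · simp [FormalMultilinearSeries.partialSum, Finset.sum_range_succ, hc, -FormalMultilinearSeries.apply_eq_prod_smul_coeff]
  · simp only [← norm_pow]; exact (isBigO_refl _ _).norm_left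

lemma expansion (α a b : ℝ) : (fun e : ℝ => (1 + ((e * a) ^ 2 * (e ^ 2 * b) ^ 2 +
      (e * a) ^ 3 * (e ^ 2 * b) ^ 5 * Real.exp ((e * a) * (e ^ 2 * b)))) ^ α -
      (1 + α * e ^ 6 * (a ^ 2 * b ^ 2) + α * (α - 1) / 2 * e ^ 12 * (a ^ 4 * b ^ 4)
        + α * e ^ 13 * (a ^ 3 * b ^ 5))) =o[𝓝[>] 0] fun e => e ^ 13 := by
  refine IsLittleO.mono ?_ nhdsWithin_le_nhds
  set E : ℝ → ℝ := fun e => Real.exp (e ^ 3 * (a * b)) with hE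
  have hcE : Continuous E := by fun_prop
  set q : ℝ → ℝ := fun e => a ^ 2 * b ^ 2 + e ^ 7 * (a ^ 3 * b ^ 5) * E e with hq
  set S : ℝ → ℝ := fun e => e ^ 6 * q e with hS
  have hcq : Continuous q := by fun_prop
  have hS0 : Tendsto S (𝓝 0) (𝓝 0) := by
    have : Continuous S := by fun_prop
    simpa [hS] using this.tendsto 0
  have hlo : ∀ r : ℝ → ℝ, Tendsto r (𝓝 0) (𝓝 0) →
      (fun e : ℝ => e ^ 13 * r e) =o[𝓝 0] fun e : ℝ => e ^ 13 := by
    intro r hr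
    have := (isBigO_refl (fun e : ℝ => e ^ 13) (𝓝 0)).mul_isLittleO ((isLittleO_one_iff ℝ).2 hr)
    simpa using this
  have h1 := (rpow_taylor α).comp_tendsto hS0
  have h2 : ((fun s : ℝ => s ^ 3) ∘ S) =o[𝓝 0] fun e : ℝ => e ^ 13 := by
    have := hlo (fun e => e ^ 5 * q e ^ 3) (by
      have : Continuous fun e => e ^ 5 * q e ^ 3 := by fun_prop
      simpa using this.tendsto 0)
    refine this.congr_left fun e => ?_
    simp only [hS, Function.comp]
    ring
  have h3 := h1.trans_isLittleO h2
  have h4 := hlo (fun e => α * (a ^ 3 * b ^ 5) * (E e - 1) + α * (α - 1) / 2 *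
      (e ^ 6 * (2 * (a ^ 2 * b ^ 2) * (a ^ 3 * b ^ 5) * E e) +
        e ^ 13 * ((a ^ 3 * b ^ 5) * E e) ^ 2)) (by
      have : Continuous fun e => α * (a ^ 3 * b ^ 5) * (E e - 1) + α * (α - 1) / 2 *
      (e ^ 6 * (2 * (a ^ 2 * b ^ 2) * (a ^ 3 * b ^ 5) * E e) +
        e ^ 13 * ((a ^ 3 * b ^ 5) * E e) ^ 2) := by fun_prop
      simpa [hE] using this.tendsto 0)
  refine (h3.add h4).congr_left fun e => ?_
  have e1 : (e * a) ^ 2 * (e ^ 2 * b) ^ 2 +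
      (e * a) ^ 3 * (e ^ 2 * b) ^ 5 * Real.exp ((e * a) * (e ^ 2 * b)) = S e := by
    have : (e * a) * (e ^ 2 * b) = e ^ 3 * (a * b) := by ring
    rw [this]
    simp only [hS, hq, hE]
    ring
  rw [e1]
  simp only [Function.comp]
  have e2 : α * S e + α * (α - 1) / 2 * S e ^ 2 = α * (e ^ 6 * q e) + α * (α - 1) / 2 * (e ^ 6 * q e) ^ 2 := rfl
  linear_combination (-1 : ℝ) * e2 + (by simp only [hq]; ring : α * (e ^ 6 * q e) + α * (α - 1) / 2 * (e ^ 6 * q e) ^ 2 = α * e ^ 6 * (a ^ 2 * b ^ 2) + α * (α - 1) / 2 * e ^ 12 * (a ^ 4 * b ^ 4)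
        + α * e ^ 13 * (a ^ 3 * b ^ 5) + e ^ 13 * (α * (a ^ 3 * b ^ 5) * (E e - 1) + α * (α - 1) / 2 *
      (e ^ 6 * (2 * (a ^ 2 * b ^ 2) * (a ^ 3 * b ^ 5) * E e) +
        e ^ 13 * ((a ^ 3 * b ^ 5) * E e) ^ 2)))

lemma exists_tuple (X : Type*) [LinearOrder X] [Infinite X] (n : ℕ) :
    ∃ x : Fin n → X, StrictMono x := by
  obtain ⟨s, hs⟩ := Infinite.exists_subset_card_eq X n
  exact ⟨s.orderEmbOfFin hs, (s.orderEmbOfFin hs).strictMono⟩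

lemma power_det {X Y : Type*} [LinearOrder X] [LinearOrder Y] (φ : X → ℝ) (ψ : Y → ℝ)
    (hφ : StrictMono φ) (hψ : StrictMono ψ) (hφ0 : ∀ x, 0 < φ x) (hψ0 : ∀ y, 0 < ψ y)
    (F : ℝ → ℝ) (H : ∀ K : X → Y → ℝ, IsTPKernel K → IsTPKernel fun a b => F (K a b))
    (c α : ℝ) (hc : 0 < c) (hF : ∀ x, 0 < x → F x = c * x ^ α)
    (n : ℕ) (x : Fin n → X) (y : Fin n → Y) (hx : StrictMono x) (hy : StrictMono y)
    (e : ℝ) (he : 0 < e) :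
    0 < (Matrix.of fun i j : Fin n => (1 + ((e * φ (x i)) ^ 2 * (e ^ 2 * ψ (y j)) ^ 2 +
      (e * φ (x i)) ^ 3 * (e ^ 2 * ψ (y j)) ^ 5 *
        Real.exp ((e * φ (x i)) * (e ^ 2 * ψ (y j))))) ^ α).det := by
  have h1 := special_TP (fun x => e * φ x) (fun y => e ^ 2 * ψ y)
    (fun a b h => mul_lt_mul_of_pos_left (hφ h) he)
    (fun a b h => mul_lt_mul_of_pos_left (hψ h) (by positivity))
    (fun x => mul_pos he (hφ0 x)) (fun y => mul_pos (by positivity) (hψ0 y))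
  have h2 := H _ h1
  have h3 := scale_TP _ h2 (fun _ => c⁻¹) (fun _ => 1) (fun _ => inv_pos.2 hc) (fun _ => one_pos)
  have h4 := h3 n x y hx hy
  have e1 : ∀ i j, c⁻¹ * (1 * F (1 + ((e * φ (x i)) ^ 2 * (e ^ 2 * ψ (y j)) ^ 2 +
      (e * φ (x i)) ^ 3 * (e ^ 2 * ψ (y j)) ^ 5 *
        Real.exp ((e * φ (x i)) * (e ^ 2 * ψ (y j)))))) =
      (1 + ((e * φ (x i)) ^ 2 * (e ^ 2 * ψ (y j)) ^ 2 +
      (e * φ (x i)) ^ 3 * (e ^ 2 * ψ (y j)) ^ 5 *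
        Real.exp ((e * φ (x i)) * (e ^ 2 * ψ (y j))))) ^ α := by
    intro i j
    rw [hF _ (TP_pos _ h1 (x i) (y j)), one_mul, inv_mul_cancel_left₀ hc.ne']
  simp only [e1] at h4
  exact h4

lemma alpha_ge {X Y : Type*} [LinearOrder X] [LinearOrder Y] [Infinite X] [Infinite Y]
    (φ : X → ℝ) (ψ : Y → ℝ)
    (hφ : StrictMono φ) (hψ : StrictMono ψ) (hφ0 : ∀ x, 0 < φ x) (hψ0 : ∀ y, 0 < ψ y)
    (F : ℝ → ℝ) (H : ∀ K : X → Y → ℝ, IsTPKernel K → IsTPKernel fun a b => F (K a b))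
    (c α : ℝ) (hc : 0 < c) (hα : 0 < α) (hF : ∀ x, 0 < x → F x = c * x ^ α) : 1 ≤ α := by
  by_contra hlt
  push Not at hlt
  obtain ⟨x, hx⟩ := exists_tuple X 3
  obtain ⟨y, hy⟩ := exists_tuple Y 3
  have hl : StrictMono (![0, 2, 4] : Fin 3 → ℕ) := by decide
  have hP := gv_pos 3 ![0, 2, 4] (fun i => φ (x i)) hl (hφ.comp hx) (fun i => hφ0 _)
  have hQ := gv_pos 3 ![0, 2, 4] (fun i => ψ (y i)) hl (hψ.comp hy) (fun i => hψ0 _)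
  rw [← Matrix.det_transpose] at hQ
  have hneg : α * (α - 1) / 2 < 0 := by nlinarith
  have key := lead_det 3 _ _ hP.ne' hQ.ne' ![1, α, α * (α - 1) / 2]
    (by
      intro k
      fin_cases k
      · exact one_ne_zero
      · exact hα.ne'
      · exact hneg.ne)
    ![0, 6, 12] 12 (by decide) _
    (fun e he => power_det φ ψ hφ hψ hφ0 hψ0 F H c α hc hF 3 x y hx hy e he)
    (by
      intro i j
      have h1 := expansion α (φ (x i)) (ψ (y j))
      have h2 : (fun e : ℝ => e ^ 13) =o[𝓝[>] 0] fun e : ℝ => e ^ 12 :=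
        (isLittleO_pow_pow (𝕜 := ℝ) (by norm_num : 12 < 13)).mono nhdsWithin_le_nhds
      have h3 := (h1.trans h2).add (h2.const_mul_left (α * (φ (x i) ^ 3 * ψ (y j) ^ 5)))
      refine h3.congr_left fun e => ?_
      simp [Fin.sum_univ_three]
      ring)
  rw [Fin.prod_univ_three] at key
  simp only [Matrix.cons_val] at key
  have := mul_pos hP hQ
  rw [mul_assoc] at key
  have := (mul_pos_iff_of_pos_right this).1 key
  nlinarith

lemma alpha_le {X Y : Type*} [LinearOrder X] [LinearOrder Y] [Infinite X] [Infinite Y]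
    (φ : X → ℝ) (ψ : Y → ℝ)
    (hφ : StrictMono φ) (hψ : StrictMono ψ) (hφ0 : ∀ x, 0 < φ x) (hψ0 : ∀ y, 0 < ψ y)
    (F : ℝ → ℝ) (H : ∀ K : X → Y → ℝ, IsTPKernel K → IsTPKernel fun a b => F (K a b))
    (c α : ℝ) (hc : 0 < c) (hα : 0 < α) (hF : ∀ x, 0 < x → F x = c * x ^ α) : α ≤ 1 := by
  by_contra hlt
  push Not at hlt
  obtain ⟨x, hx⟩ := exists_tuple X 4
  obtain ⟨y, hy⟩ := exists_tuple Y 4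
  have hl : StrictMono (![0, 2, 3, 4] : Fin 4 → ℕ) := by decide
  have hm : StrictMono (![0, 2, 4, 5] : Fin 4 → ℕ) := by decide
  have hP0 := gv_pos 4 ![0, 2, 3, 4] (fun i => φ (x i)) hl (hφ.comp hx) (fun i => hφ0 _)
  have hQ := gv_pos 4 ![0, 2, 4, 5] (fun i => ψ (y i)) hm (hψ.comp hy) (fun i => hψ0 _)
  rw [← Matrix.det_transpose] at hQ
  have hP : (Matrix.of fun i k : Fin 4 => φ (x i) ^ (![0, 2, 4, 3] : Fin 4 → ℕ) k).det < 0 := by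
    have := Matrix.det_permute' (Equiv.swap (2 : Fin 4) 3)
      (Matrix.of fun i k : Fin 4 => φ (x i) ^ (![0, 2, 3, 4] : Fin 4 → ℕ) k)
    rw [Equiv.Perm.sign_swap (by decide)] at this
    have e : (Matrix.of fun i k : Fin 4 => φ (x i) ^ (![0, 2, 4, 3] : Fin 4 → ℕ) k) =
      (Matrix.of fun i k : Fin 4 => φ (x i) ^ (![0, 2, 3, 4] : Fin 4 → ℕ) k).submatrix id
        (Equiv.swap (2 : Fin 4) 3) := by
      ext i k
      have : (![0, 2, 4, 3] : Fin 4 → ℕ) k =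
        (![0, 2, 3, 4] : Fin 4 → ℕ) (Equiv.swap (2 : Fin 4) 3 k) := by
        revert k; decide
      simp only [Matrix.of_apply, Matrix.submatrix_apply, id, this]
    rw [e, this]
    simpa using hP0
  have hpos : 0 < α * (α - 1) / 2 := by nlinarith
  have key := lead_det 4 _ _ hP.ne hQ.ne' ![1, α, α * (α - 1) / 2, α]
    (by
      intro k
      fin_cases k
      · exact one_ne_zero
      · exact hα.ne'
      · exact hpos.ne'
      · exact hα.ne')
    ![0, 6, 12, 13] 13 (by decide) _
    (fun e he => power_det φ ψ hφ hψ hφ0 hψ0 F H c α hc hF 4 x y hx hy e he)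
    (by
      intro i j
      refine (expansion α (φ (x i)) (ψ (y j))).congr_left fun e => ?_
      simp [Fin.sum_univ_four])
  rw [Fin.prod_univ_four] at key
  simp only [Matrix.cons_val] at key
  have h1 := mul_neg_of_neg_of_pos hP hQ
  have h2 : 0 < 1 * α * (α * (α - 1) / 2) * α := by positivity
  have h3 := mul_neg_of_pos_of_neg h2 h1
  rw [mul_assoc] at key
  exact lt_asymm key h3

theorem stmt_19 (X Y : Type*) [LinearOrder X] [LinearOrder Y]
    [Infinite X] [Infinite Y] (hXY : ∃ K : X → Y → ℝ, IsTPKernel K)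
    (F : ℝ → ℝ) (hF : ∀ x : ℝ, 0 < x → 0 < F x) :
    (∀ K : X → Y → ℝ, IsTPKernel K → IsTPKernel fun a b => F (K a b)) ↔
      ∃ c : ℝ, 0 < c ∧ ∀ x : ℝ, 0 < x → F x = c * x := by
  constructor
  · intro H
    obtain ⟨K, hK⟩ := hXY
    have hp := TP_pos K hK
    obtain ⟨xs, hxs⟩ := exists_tuple X 2
    obtain ⟨ys, hys⟩ := exists_tuple Y 2
    have hx : xs 0 < xs 1 := hxs (by decide)
    have hy : ys 0 < ys 1 := hys (by decide)
    set φ : X → ℝ := fun x => K x (ys 1) / K x (ys 0)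
    set ψ : Y → ℝ := fun y => K (xs 1) y / K (xs 0) y
    have hφ : StrictMono φ := by
      intro a b hab
      have := TP_two K hK a b (ys 0) (ys 1) hab hy
      simp only [φ]
      rw [div_lt_div_iff₀ (hp _ _) (hp _ _)]
      linarith
    have hψ : StrictMono ψ := by
      intro a b hab
      have := TP_two K hK (xs 0) (xs 1) a b hx hab
      simp only [ψ]
      rw [div_lt_div_iff₀ (hp _ _) (hp _ _)]
      linarith
    have hφ0 : ∀ x, 0 < φ x := fun x => div_pos (hp _ _) (hp _ _)
    have hψ0 : ∀ x, 0 < ψ x := fun x => div_pos (hp _ _) (hp _ _)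
    obtain ⟨c, α, hc, hα, hFα⟩ := power_law F hF
      (two_by_two φ ψ hφ hψ hφ0 hψ0 _ _ _ _ hx hy F H)
    have h1 : α = 1 := le_antisymm (alpha_le φ ψ hφ hψ hφ0 hψ0 F H c α hc hα hFα)
      (alpha_ge φ ψ hφ hψ hφ0 hψ0 F H c α hc hα hFα)
    refine ⟨c, hc, fun x hx => ?_⟩
    rw [hFα x hx, h1, Real.rpow_one]
  · rintro ⟨c, hc, hFc⟩ K hK
    have h := scale_TP K hK (fun _ => c) (fun _ => 1) (fun _ => hc) (fun _ => one_pos)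
    have e : (fun a b => F (K a b)) = fun x y => c * (1 * K x y) := by
      funext a b
      rw [hFc _ (TP_pos K hK a b), one_mul]
    rw [e]
    exact h
end
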